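/- arXiv:2405.05717 — 2 statements merged into one kernel-verified Lean document; each statement's English description precedes it below -/
import Mathlib

section
/- Let ψ satisfy hypotheses (i)–(iv) below on the domain Q. Then there exist two sequences {(x_m^{(1)}, y_m^{(1)})}_{m∈ℕ} and {(x_m^{(2)}, y_m^{(2)})}_{m∈ℕ} of points of Q, both converging to the point P₀ = (0, f(0)), such that ψ_{xx}(x_m^{(1)}, y_m^{(1)}) → 1/a and ψ_{xx}(x_m^{(2)}, y_m^{(2)}) → 0 as m → ∞. In particular, ψ_{xx} has no continuous extension to closure(Q) at the point P₀, so ψ restricted to closure(Q) is not C² at P₀. -/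
open Set Filter

/-- First partial derivative in the `x`-direction. -/
noncomputable def pd1 (ψ : ℝ × ℝ → ℝ) (p : ℝ × ℝ) : ℝ :=
  deriv (fun x => ψ (x, p.2)) p.1

/-- First partial derivative in the `y`-direction. -/
noncomputable def pd2 (ψ : ℝ × ℝ → ℝ) (p : ℝ × ℝ) : ℝ :=
  deriv (fun y => ψ (p.1, y)) p.2

/-- The domain `Q = {(x,y) : 0 < x < ε₀, 0 < y < f(x)}`. -/
def Qset (ε₀ : ℝ) (f : ℝ → ℝ) : Set (ℝ × ℝ) :=
  {p | 0 < p.1 ∧ p.1 < ε₀ ∧ 0 < p.2 ∧ p.2 < f p.1}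

/-- The part of the closure of `Q` with `x > 0`, on which the `Oᵢ` are `C¹`. -/
def Dset (ε₀ : ℝ) (f : ℝ → ℝ) : Set (ℝ × ℝ) :=
  closure (Qset ε₀ f) ∩ {p | 0 < p.1}

/-- The upper boundary `{(x, f(x)) : 0 ≤ x ≤ ε₀}`. -/
def Gamf (ε₀ : ℝ) (f : ℝ → ℝ) : Set (ℝ × ℝ) :=
  (fun x => (x, f x)) '' Set.Icc 0 ε₀

/-!
If `ψₓₓ` stayed above some `k > 0` near `P₀`, then integrating twice from `x = 0`, where `ψ` and
`ψₓ` vanish, would give `ψ(x, f 0) ≥ c x²` with `c > 0`. But the equation gives `ψ_yy = O(x)` and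
`ψ = O(x²)`, so interpolation gives `ψ_y = o(x)` at the upper boundary; the oblique condition then
gives `ψₓ = o(x)` there, and integrating along the boundary, `ψ = o(x²)`. If `ψₓₓ` stayed below
some `k < 1/a`, then `ψₓ ≤ k x`, and the equation is a linear one whose leading coefficient is at
least `τ x` with `τ > 1`; comparison with the barrier `x^q (x - κ (y - y₀)²)` shows that `ψ` grows
at least like `x^(q+1)` for some `q < 1`, contradicting `ψ = O(x²)`. Since `ψₓₓ` is continuous and
boxes are connected, `ψₓₓ` takes every value in `(0, 1/a)` arbitrarily close to `P₀`.
-/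

open Asymptotics
open scoped Topology NNReal

section PartialDerivatives

variable {g g₁ g₂ : ℝ × ℝ → ℝ} {p : ℝ × ℝ}

theorem pd1_eq_fderiv (hg : DifferentiableAt ℝ g p) : pd1 g p = fderiv ℝ g p (1, 0) :=
  (hg.hasFDerivAt.comp_hasDerivAt p.1
    ((hasDerivAt_id p.1).prodMk (hasDerivAt_const p.1 p.2))).deriv

theorem pd2_eq_fderiv (hg : DifferentiableAt ℝ g p) : pd2 g p = fderiv ℝ g p (0, 1) :=
  (hg.hasFDerivAt.comp_hasDerivAt p.2
    ((hasDerivAt_const p.2 p.1).prodMk (hasDerivAt_id p.2))).deriv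

theorem hasDerivAt_comp_prodMk {c₁ c₂ : ℝ → ℝ} {d₁ d₂ t : ℝ}
    (hg : DifferentiableAt ℝ g (c₁ t, c₂ t))
    (h₁ : HasDerivAt c₁ d₁ t) (h₂ : HasDerivAt c₂ d₂ t) :
    HasDerivAt (fun s => g (c₁ s, c₂ s))
      (pd1 g (c₁ t, c₂ t) * d₁ + pd2 g (c₁ t, c₂ t) * d₂) t := by
  have hsplit : ((d₁, d₂) : ℝ × ℝ) = d₁ • (1, 0) + d₂ • (0, 1) := by simp
  have hmain := hg.hasFDerivAt.comp_hasDerivAt t (h₁.prodMk h₂)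
  rw [hsplit, map_add, map_smul, map_smul, ← pd1_eq_fderiv hg, ← pd2_eq_fderiv hg, smul_eq_mul,
    smul_eq_mul, mul_comm d₁, mul_comm d₂] at hmain
  exact hmain

theorem hasDerivAt_pd1 {x y : ℝ} (hg : DifferentiableAt ℝ g (x, y)) :
    HasDerivAt (fun t => g (t, y)) (pd1 g (x, y)) x := by
  simpa using hasDerivAt_comp_prodMk hg (hasDerivAt_id' x) (hasDerivAt_const x y)

theorem hasDerivAt_pd2 {x y : ℝ} (hg : DifferentiableAt ℝ g (x, y)) :
    HasDerivAt (fun t => g (x, t)) (pd2 g (x, y)) y := by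
  simpa using hasDerivAt_comp_prodMk hg (hasDerivAt_const y x) (hasDerivAt_id' y)

theorem pd1_congr (h : g₁ =ᶠ[𝓝 p] g₂) : pd1 g₁ p = pd1 g₂ p :=
  (h.comp_tendsto (Continuous.tendsto' (by fun_prop) p.1 p rfl)).deriv_eq

theorem pd2_congr (h : g₁ =ᶠ[𝓝 p] g₂) : pd2 g₁ p = pd2 g₂ p :=
  (h.comp_tendsto (Continuous.tendsto' (by fun_prop) p.2 p rfl)).deriv_eq

theorem eventually_differentiableAt_of_contDiffAt {n : WithTop ℕ∞} (hg : ContDiffAt ℝ n g p)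
    (hn : 1 ≤ n) : ∀ᶠ q in 𝓝 p, DifferentiableAt ℝ g q :=
  ((hg.of_le hn).eventually (by simp)).mono fun _ hq => hq.differentiableAt one_ne_zero

theorem contDiffAt_pd1 {m n : WithTop ℕ∞} (hg : ContDiffAt ℝ n g p) (hmn : m + 1 ≤ n) :
    ContDiffAt ℝ m (pd1 g) p := by
  refine ((hg.fderiv_right hmn).clm_apply contDiffAt_const).congr_of_eventuallyEq
    (f := fun q => fderiv ℝ g q (1, 0)) ?_
  exact (eventually_differentiableAt_of_contDiffAt hg (le_add_self.trans hmn)).mono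
    fun q hq => pd1_eq_fderiv hq

theorem contDiffAt_pd2 {m n : WithTop ℕ∞} (hg : ContDiffAt ℝ n g p) (hmn : m + 1 ≤ n) :
    ContDiffAt ℝ m (pd2 g) p := by
  refine ((hg.fderiv_right hmn).clm_apply contDiffAt_const).congr_of_eventuallyEq
    (f := fun q => fderiv ℝ g q (0, 1)) ?_
  exact (eventually_differentiableAt_of_contDiffAt hg (le_add_self.trans hmn)).mono
    fun q hq => pd2_eq_fderiv hq

theorem differentiableAt_pd1 (hg : ContDiffAt ℝ 2 g p) : DifferentiableAt ℝ (pd1 g) p :=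
  (contDiffAt_pd1 (m := 1) hg one_add_one_eq_two.le).differentiableAt one_ne_zero

theorem differentiableAt_pd2 (hg : ContDiffAt ℝ 2 g p) : DifferentiableAt ℝ (pd2 g) p :=
  (contDiffAt_pd2 (m := 1) hg one_add_one_eq_two.le).differentiableAt one_ne_zero

theorem pd1_pd2_eq_pd2_pd1 (hg : ContDiffAt ℝ 2 g p) : pd1 (pd2 g) p = pd2 (pd1 g) p := by
  have hdiff := eventually_differentiableAt_of_contDiffAt hg one_le_two
  have hfd : DifferentiableAt ℝ (fderiv ℝ g) p :=
    (hg.fderiv_right (m := 1) one_add_one_eq_two.le).differentiableAt one_ne_zero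
  rw [pd1_congr (hdiff.mono fun q hq => pd2_eq_fderiv hq),
    pd2_congr (hdiff.mono fun q hq => pd1_eq_fderiv hq),
    pd1_eq_fderiv (hfd.clm_apply (differentiableAt_const _)),
    pd2_eq_fderiv (hfd.clm_apply (differentiableAt_const _)),
    fderiv_clm_apply hfd (differentiableAt_const _),
    fderiv_clm_apply hfd (differentiableAt_const _)]
  simpa using (hg.isSymmSndFDerivAt (by simp)).eq (1, 0) (0, 1)

theorem pd1_sub (h₁ : DifferentiableAt ℝ g₁ p) (h₂ : DifferentiableAt ℝ g₂ p) :
    pd1 (g₁ - g₂) p = pd1 g₁ p - pd1 g₂ p :=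
  ((hasDerivAt_pd1 h₁).sub (hasDerivAt_pd1 h₂)).deriv

theorem pd2_sub (h₁ : DifferentiableAt ℝ g₁ p) (h₂ : DifferentiableAt ℝ g₂ p) :
    pd2 (g₁ - g₂) p = pd2 g₁ p - pd2 g₂ p :=
  ((hasDerivAt_pd2 h₁).sub (hasDerivAt_pd2 h₂)).deriv

theorem pd1_const_smul (c : ℝ) (h : DifferentiableAt ℝ g p) : pd1 (c • g) p = c * pd1 g p :=
  ((hasDerivAt_pd1 h).const_mul c).deriv

theorem pd2_const_smul (c : ℝ) (h : DifferentiableAt ℝ g p) : pd2 (c • g) p = c * pd2 g p :=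
  ((hasDerivAt_pd2 h).const_mul c).deriv

theorem abs_pd1_le_of_lipschitzOnWith {K : ℝ≥0} {s : Set (ℝ × ℝ)} (hg : LipschitzOnWith K g s)
    (hs : s ∈ 𝓝 p) : |pd1 g p| ≤ K := by
  have hslice := hg.comp (LipschitzWith.prodMk_right p.2).lipschitzOnWith (mapsTo_preimage _ s)
  rw [mul_one] at hslice
  exact norm_deriv_le_of_lipschitzOn
    ((Continuous.tendsto' (by fun_prop) p.1 p rfl).eventually_mem hs) hslice

theorem abs_pd2_le_of_lipschitzOnWith {K : ℝ≥0} {s : Set (ℝ × ℝ)} (hg : LipschitzOnWith K g s)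
    (hs : s ∈ 𝓝 p) : |pd2 g p| ≤ K := by
  have hslice := hg.comp (LipschitzWith.prodMk_left p.1).lipschitzOnWith (mapsTo_preimage _ s)
  rw [mul_one] at hslice
  exact norm_deriv_le_of_lipschitzOn
    ((Continuous.tendsto' (by fun_prop) p.2 p rfl).eventually_mem hs) hslice

end PartialDerivatives

section SecondDerivativeTest

variable {g : ℝ × ℝ → ℝ} {p : ℝ × ℝ}

theorem deriv_deriv_nonneg_of_isLocalMin {h : ℝ → ℝ} {x : ℝ} (hmin : IsLocalMin h x)
    (hc : ContinuousAt h x) : 0 ≤ deriv (deriv h) x := by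
  by_contra! hneg
  have hmax : IsLocalMax h x := isLocalMax_of_deriv_deriv_neg hneg hmin.deriv_eq_zero hc
  have hconst : h =ᶠ[𝓝 x] fun _ => h x := by
    filter_upwards [hmin, hmax] with y h₁ h₂ using le_antisymm h₂ h₁
  refine hneg.ne ?_
  rw [hconst.deriv.deriv_eq, deriv_const', deriv_const]

theorem pd1_eq_zero_of_isLocalMin (hmin : IsLocalMin g p) : pd1 g p = 0 :=
  (hmin.comp_continuous (g := fun x => (x, p.2)) (b := p.1) (by fun_prop)).deriv_eq_zero

theorem pd2_eq_zero_of_isLocalMin (hmin : IsLocalMin g p) : pd2 g p = 0 :=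
  (hmin.comp_continuous (g := fun y => (p.1, y)) (b := p.2) (by fun_prop)).deriv_eq_zero

theorem pd_quadraticForm_nonneg_of_isLocalMin (hmin : IsLocalMin g p) (hg : ContDiffAt ℝ 2 g p)
    (v w : ℝ) :
    0 ≤ v ^ 2 * pd1 (pd1 g) p + 2 * v * w * pd2 (pd1 g) p + w ^ 2 * pd2 (pd2 g) p := by
  set c₁ : ℝ → ℝ := fun t => p.1 + t * v
  set c₂ : ℝ → ℝ := fun t => p.2 + t * w
  have hc₁ t : HasDerivAt c₁ v t := (hasDerivAt_mul_const v).const_add p.1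
  have hc₂ t : HasDerivAt c₂ w t := (hasDerivAt_mul_const w).const_add p.2
  have hc₀ : (c₁ 0, c₂ 0) = p := by simp [c₁, c₂]
  have hcont : Continuous fun t => (c₁ t, c₂ t) := by fun_prop
  rw [← hc₀] at hmin hg ⊢
  have hfirst : deriv (fun t => g (c₁ t, c₂ t)) =ᶠ[𝓝 0]
      fun t => pd1 g (c₁ t, c₂ t) * v + pd2 g (c₁ t, c₂ t) * w :=
    (hcont.continuousAt.eventually
      (eventually_differentiableAt_of_contDiffAt hg one_le_two)).mono
      fun t ht => (hasDerivAt_comp_prodMk ht (hc₁ t) (hc₂ t)).deriv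
  have hsecond := ((hasDerivAt_comp_prodMk (differentiableAt_pd1 hg) (hc₁ 0) (hc₂ 0)).mul_const
    v).fun_add ((hasDerivAt_comp_prodMk (differentiableAt_pd2 hg) (hc₁ 0) (hc₂ 0)).mul_const w)
  have hnonneg : 0 ≤ deriv (deriv fun t => g (c₁ t, c₂ t)) 0 :=
    deriv_deriv_nonneg_of_isLocalMin (hmin.comp_continuous (b := 0) hcont.continuousAt)
      (hg.continuousAt.comp_of_eq hcont.continuousAt rfl)
  rw [hfirst.deriv_eq, hsecond.deriv, pd1_pd2_eq_pd2_pd1 hg] at hnonneg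
  linarith

end SecondDerivativeTest

section Comparison

/-- The linear second-order operator `A ∂ₓₓ + B ∂ₓ∂_y + C ∂_yy + D ∂ₓ + E ∂_y` with variable
coefficients. -/
noncomputable def ellOp (A B C D E g : ℝ × ℝ → ℝ) (p : ℝ × ℝ) : ℝ :=
  A p * pd1 (pd1 g) p + B p * pd2 (pd1 g) p + C p * pd2 (pd2 g) p + D p * pd1 g p + E p * pd2 g p

variable {A B C D E g g₁ g₂ : ℝ × ℝ → ℝ} {p : ℝ × ℝ}

theorem ellOp_sub (h₁ : ContDiffAt ℝ 2 g₁ p) (h₂ : ContDiffAt ℝ 2 g₂ p) :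
    ellOp A B C D E (g₁ - g₂) p = ellOp A B C D E g₁ p - ellOp A B C D E g₂ p := by
  have hev := (eventually_differentiableAt_of_contDiffAt h₁ one_le_two).and
    (eventually_differentiableAt_of_contDiffAt h₂ one_le_two)
  have hpd1 : pd1 (g₁ - g₂) =ᶠ[𝓝 p] pd1 g₁ - pd1 g₂ := hev.mono fun q hq => pd1_sub hq.1 hq.2
  have hpd2 : pd2 (g₁ - g₂) =ᶠ[𝓝 p] pd2 g₁ - pd2 g₂ := hev.mono fun q hq => pd2_sub hq.1 hq.2
  simp only [ellOp, pd1_congr hpd1, pd2_congr hpd1, pd2_congr hpd2, hpd1.eq_of_nhds,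
    hpd2.eq_of_nhds, Pi.sub_apply,
    pd1_sub (differentiableAt_pd1 h₁) (differentiableAt_pd1 h₂),
    pd2_sub (differentiableAt_pd1 h₁) (differentiableAt_pd1 h₂),
    pd2_sub (differentiableAt_pd2 h₁) (differentiableAt_pd2 h₂)]
  ring

theorem ellOp_const_smul (c : ℝ) (hg : ContDiffAt ℝ 2 g p) :
    ellOp A B C D E (c • g) p = c * ellOp A B C D E g p := by
  have hev := eventually_differentiableAt_of_contDiffAt hg one_le_two
  have hpd1 : pd1 (c • g) =ᶠ[𝓝 p] c • pd1 g := hev.mono fun q hq => pd1_const_smul c hq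
  have hpd2 : pd2 (c • g) =ᶠ[𝓝 p] c • pd2 g := hev.mono fun q hq => pd2_const_smul c hq
  simp only [ellOp, pd1_congr hpd1, pd2_congr hpd1, pd2_congr hpd2, hpd1.eq_of_nhds,
    hpd2.eq_of_nhds, Pi.smul_apply, smul_eq_mul,
    pd1_const_smul c (differentiableAt_pd1 hg), pd2_const_smul c (differentiableAt_pd1 hg),
    pd2_const_smul c (differentiableAt_pd2 hg)]
  ring

theorem ellOp_nonneg_of_isLocalMin (hA : 0 < A p) (hB : B p ^ 2 ≤ 4 * A p * C p)
    (hg : ContDiffAt ℝ 2 g p) (hmin : IsLocalMin g p) : 0 ≤ ellOp A B C D E g p := by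
  have hyy : 0 ≤ pd2 (pd2 g) p := by simpa using pd_quadraticForm_nonneg_of_isLocalMin hmin hg 0 1
  -- `4A` times the second-order part of the operator is the quadratic form at `(2A, B)` plus
  -- `(4AC - B²) ∂_yy`.
  have hdir := pd_quadraticForm_nonneg_of_isLocalMin hmin hg (2 * A p) (B p)
  have hdisc := mul_nonneg (sub_nonneg.2 hB) hyy
  rw [ellOp, pd1_eq_zero_of_isLocalMin hmin, pd2_eq_zero_of_isLocalMin hmin, mul_zero, mul_zero,
    add_zero, add_zero]
  refine nonneg_of_mul_nonneg_right (a := 4 * A p) ?_ (by positivity)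
  linarith

theorem not_isLocalMin_sub_of_ellOp_lt (hA : 0 < A p) (hB : B p ^ 2 ≤ 4 * A p * C p)
    (h₁ : ContDiffAt ℝ 2 g₁ p) (h₂ : ContDiffAt ℝ 2 g₂ p)
    (hlt : ellOp A B C D E g₁ p < ellOp A B C D E g₂ p) : ¬ IsLocalMin (g₁ - g₂) p := fun hmin =>
  hlt.not_ge <| sub_nonneg.1 <| (ellOp_nonneg_of_isLocalMin hA hB (h₁.sub h₂) hmin).trans_eq
    (ellOp_sub h₁ h₂)

theorem nonneg_of_forall_not_isLocalMin {X : Type*} [TopologicalSpace X] {K : Set X} {u : X → ℝ}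
    (hK : IsCompact K) (hu : ContinuousOn u K)
    (hneg : ∀ x ∈ K, u x < 0 → K ∈ 𝓝 x ∧ ¬ IsLocalMin u x) : ∀ x ∈ K, 0 ≤ u x := by
  intro x hx
  obtain ⟨z, hz, hmin⟩ := hK.exists_isMinOn ⟨x, hx⟩ hu
  by_contra! hlt
  obtain ⟨hKz, hnot⟩ := hneg z hz ((hmin hx).trans_lt hlt)
  exact hnot (hmin.isLocalMin hKz)

/-- The comparison function `x ^ q * (x - κ * (y - y₀) ^ 2)`: it is a subsolution near `x = 0` of
operators degenerating linearly there, it is positive only inside the parabola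
`κ * (y - y₀) ^ 2 < x`, and it equals `x ^ (q + 1)` on the axis `y = y₀`. -/
noncomputable def barrier (q κ y₀ : ℝ) (p : ℝ × ℝ) : ℝ :=
  p.1 ^ q * (p.1 - κ * (p.2 - y₀) ^ 2)

variable {q κ y₀ : ℝ}

theorem contDiffAt_barrier {n : WithTop ℕ∞} (hp : 0 < p.1) : ContDiffAt ℝ n (barrier q κ y₀) p := by
  have hrpow : ContDiffAt ℝ n (fun p : ℝ × ℝ => p.1 ^ q) p :=
    contDiffAt_fst.rpow_const_of_ne hp.ne'
  unfold barrier
  fun_prop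

theorem continuous_barrier (hq : 0 < q) : Continuous (barrier q κ y₀) := by
  have hrpow : Continuous fun p : ℝ × ℝ => p.1 ^ q := continuous_fst.rpow_const fun _ => .inr hq.le
  unfold barrier
  fun_prop

theorem barrier_le_rpow (hq : 0 < q) (hκ : 0 ≤ κ) (hp : 0 ≤ p.1) :
    barrier q κ y₀ p ≤ p.1 ^ (q + 1) := by
  rw [Real.rpow_add_one' hp (by positivity), barrier]
  gcongr
  exact sub_le_self _ (by positivity)

theorem mul_sq_lt_of_barrier_pos (hp : 0 ≤ p.1) (hpos : 0 < barrier q κ y₀ p) :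
    κ * (p.2 - y₀) ^ 2 < p.1 :=
  sub_pos.1 (pos_of_mul_pos_right hpos (Real.rpow_nonneg hp q))

theorem barrier_axis {x : ℝ} (hq : 0 < q) (hx : 0 ≤ x) : barrier q κ y₀ (x, y₀) = x ^ (q + 1) := by
  simp [barrier, Real.rpow_add_one' hx (by positivity : q + 1 ≠ 0)]

theorem pd1_barrier (hp : 0 < p.1) : pd1 (barrier q κ y₀) p =
    p.1 ^ (q - 1) * ((q + 1) * p.1 - q * κ * (p.2 - y₀) ^ 2) := by
  have h := (Real.hasDerivAt_rpow_const (p := q) (.inl hp.ne')).mul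
    ((hasDerivAt_id' p.1).sub_const (κ * (p.2 - y₀) ^ 2))
  refine h.deriv.trans ?_
  rw [Real.rpow_sub_one hp.ne']
  field_simp
  ring

theorem pd2_barrier : pd2 (barrier q κ y₀) p = p.1 ^ q * (-(2 * κ * (p.2 - y₀))) := by
  have h := (((((hasDerivAt_id' p.2).sub_const y₀).pow 2).const_mul κ).const_sub p.1).const_mul
    (p.1 ^ q)
  refine h.deriv.trans ?_
  push_cast
  ring

theorem pd1_barrier_eventuallyEq (hp : 0 < p.1) : pd1 (barrier q κ y₀) =ᶠ[𝓝 p]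
    fun z => z.1 ^ (q - 1) * ((q + 1) * z.1 - q * κ * (z.2 - y₀) ^ 2) :=
  (continuousAt_fst.eventually (lt_mem_nhds hp)).mono fun _ => pd1_barrier

theorem pd1_pd1_barrier (hp : 0 < p.1) : pd1 (pd1 (barrier q κ y₀)) p =
    p.1 ^ (q - 1) * (q * (q + 1) + q * (1 - q) * (κ * (p.2 - y₀) ^ 2 / p.1)) := by
  have h := (Real.hasDerivAt_rpow_const (p := q - 1) (.inl hp.ne')).mul
    (((hasDerivAt_id' p.1).const_mul (q + 1)).sub_const (q * κ * (p.2 - y₀) ^ 2))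
  rw [pd1_congr (pd1_barrier_eventuallyEq hp)]
  refine h.deriv.trans ?_
  rw [Real.rpow_sub_one hp.ne' (q - 1)]
  field_simp
  ring

theorem pd2_pd1_barrier (hp : 0 < p.1) : pd2 (pd1 (barrier q κ y₀)) p =
    p.1 ^ (q - 1) * (-(2 * q * κ * (p.2 - y₀))) := by
  have h := (((((hasDerivAt_id' p.2).sub_const y₀).pow 2).const_mul (q * κ)).const_sub
    ((q + 1) * p.1)).const_mul (p.1 ^ (q - 1))
  rw [pd2_congr (pd1_barrier_eventuallyEq hp)]
  refine h.deriv.trans ?_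
  push_cast
  ring

theorem pd2_pd2_barrier : pd2 (pd2 (barrier q κ y₀)) p = p.1 ^ q * (-(2 * κ)) := by
  have h := ((((hasDerivAt_id' p.2).sub_const y₀).const_mul (2 * κ)).neg).const_mul (p.1 ^ q)
  rw [mul_one] at h
  rw [pd2_congr (.of_eq (funext fun z => pd2_barrier))]
  exact h.deriv

theorem ellOp_barrier (hp : 0 < p.1) : ellOp A B C D E (barrier q κ y₀) p = p.1 ^ (q - 1) *
    (A p * (q * (q + 1) + q * (1 - q) * (κ * (p.2 - y₀) ^ 2 / p.1)) +
      D p * ((q + 1) * p.1 - q * (κ * (p.2 - y₀) ^ 2)) -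
      2 * κ * (q * (p.2 - y₀) * B p + p.1 * C p + p.1 * (p.2 - y₀) * E p)) := by
  have hpow : p.1 ^ q = p.1 ^ (q - 1) * p.1 := by
    rw [Real.rpow_sub_one hp.ne', div_mul_cancel₀ _ hp.ne']
  rw [ellOp, pd1_pd1_barrier hp, pd2_pd1_barrier hp, pd2_pd2_barrier, pd1_barrier hp, pd2_barrier,
    hpow]
  ring

/-- Coefficient bounds for an operator that degenerates linearly at `x = 0`, with degeneracy rate
`τ`, drift `-δ`, ellipticity `m` in `y`, and a common upper bound `N` for the rest. The ratio
`δ / τ` of drift to degeneracy decides how slowly a positive supersolution grows away from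
`x = 0`. -/
structure IsDegenerateElliptic (τ δ m N : ℝ) (R : Set (ℝ × ℝ)) (A B C D E : ℝ × ℝ → ℝ) :
    Prop where
  mul_fst_le_A : ∀ p ∈ R, τ * p.1 ≤ A p
  abs_B_le : ∀ p ∈ R, |B p| ≤ N * p.1
  le_C : ∀ p ∈ R, m ≤ C p
  C_le : ∀ p ∈ R, C p ≤ N
  neg_le_D : ∀ p ∈ R, -δ ≤ D p
  abs_E_le : ∀ p ∈ R, |E p| ≤ N

variable {τ δ m N : ℝ} {R R' : Set (ℝ × ℝ)}

theorem IsDegenerateElliptic.mono (hcoef : IsDegenerateElliptic τ δ m N R A B C D E)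
    (hR : R' ⊆ R) : IsDegenerateElliptic τ δ m N R' A B C D E where
  mul_fst_le_A p hp := hcoef.mul_fst_le_A p (hR hp)
  abs_B_le p hp := hcoef.abs_B_le p (hR hp)
  le_C p hp := hcoef.le_C p (hR hp)
  C_le p hp := hcoef.C_le p (hR hp)
  neg_le_D p hp := hcoef.neg_le_D p (hR hp)
  abs_E_le p hp := hcoef.abs_E_le p (hR hp)

theorem ellOp_barrier_pos (hcoef : IsDegenerateElliptic τ δ m N R A B C D E) (hpR : p ∈ R)
    (hp : 0 < p.1) (hτ : 0 ≤ τ) (hδ : 0 ≤ δ) (hq : q ∈ Ioo 0 1) (hqτ : δ < τ * q)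
    (hκ : 0 ≤ κ) (hκN : 6 * N * κ ≤ τ * q - δ) (hs : |p.2 - y₀| ≤ 1)
    (hlt : κ * (p.2 - y₀) ^ 2 < p.1) : 0 < ellOp A B C D E (barrier q κ y₀) p := by
  obtain ⟨hq₀, hq₁⟩ := hq
  set s := p.2 - y₀
  set σ := κ * s ^ 2
  have hσ : 0 ≤ σ := by positivity
  have hmainA : τ * p.1 * (q * (q + 1)) ≤ A p * (q * (q + 1) + q * (1 - q) * (σ / p.1)) := by
    have h₁ : 0 ≤ q * (1 - q) * (σ / p.1) :=
      mul_nonneg (mul_nonneg hq₀.le (sub_nonneg.2 hq₁.le)) (by positivity)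
    exact mul_le_mul (hcoef.mul_fst_le_A p hpR) (by linarith) (by positivity)
      ((mul_nonneg hτ hp.le).trans (hcoef.mul_fst_le_A p hpR))
  have hmainD : -δ * ((q + 1) * p.1) ≤ D p * ((q + 1) * p.1 - q * σ) := by
    have h₁ : 0 ≤ (q + 1) * p.1 - q * σ := by nlinarith
    nlinarith [hcoef.neg_le_D p hpR, mul_nonneg hδ (mul_nonneg hq₀.le hσ)]
  have hB : q * s * B p ≤ N * p.1 := by
    calc q * s * B p ≤ |q * s * B p| := le_abs_self _
      _ = q * |s| * |B p| := by rw [abs_mul, abs_mul, abs_of_pos hq₀]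
      _ ≤ 1 * 1 * (N * p.1) := by gcongr; exact hcoef.abs_B_le p hpR
      _ = N * p.1 := by ring
  have hC : p.1 * C p ≤ N * p.1 := by
    rw [mul_comm N]; gcongr; exact hcoef.C_le p hpR
  have hE : p.1 * s * E p ≤ N * p.1 := by
    calc p.1 * s * E p ≤ |p.1 * s * E p| := le_abs_self _
      _ = p.1 * |s| * |E p| := by rw [abs_mul, abs_mul, abs_of_pos hp]
      _ ≤ p.1 * 1 * N := by gcongr; exact hcoef.abs_E_le p hpR
      _ = N * p.1 := by ring
  rw [ellOp_barrier hp]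
  refine mul_pos (Real.rpow_pos_of_pos hp _) ?_
  have hlower : 2 * κ * (q * s * B p + p.1 * C p + p.1 * s * E p) ≤ (τ * q - δ) * p.1 :=
    calc 2 * κ * (q * s * B p + p.1 * C p + p.1 * s * E p)
        ≤ 2 * κ * (N * p.1 + N * p.1 + N * p.1) := by gcongr
      _ = 6 * N * κ * p.1 := by ring
      _ ≤ (τ * q - δ) * p.1 := by gcongr
  nlinarith [mul_pos (mul_pos (sub_pos.2 hqτ) hp) hq₀]

theorem sq_le_of_isDegenerateElliptic (hcoef : IsDegenerateElliptic τ δ m N R A B C D E)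
    (hpR : p ∈ R) (hp : 0 < p.1) (hτ : 0 < τ) (hm : 0 ≤ m)
    (hsmall : N ^ 2 * p.1 ≤ 4 * τ * m) : B p ^ 2 ≤ 4 * A p * C p :=
  calc B p ^ 2 ≤ (N * p.1) ^ 2 := sq_le_sq' (abs_le.1 (hcoef.abs_B_le p hpR)).1
        (abs_le.1 (hcoef.abs_B_le p hpR)).2
    _ = N ^ 2 * p.1 * p.1 := by ring
    _ ≤ 4 * τ * m * p.1 := by gcongr
    _ = 4 * (τ * p.1) * m := by ring
    _ ≤ 4 * A p * C p := by
      have hA := hcoef.mul_fst_le_A p hpR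
      gcongr
      · linarith [mul_pos hτ hp]
      · exact hcoef.le_C p hpR

variable {ψ : ℝ × ℝ → ℝ} {x₁ h μ : ℝ}

theorem mul_barrier_le_of_ellOp_nonpos
    (hcoef : IsDegenerateElliptic τ δ m N (Ioo 0 x₁ ×ˢ Ioo (y₀ - h) (y₀ + h)) A B C D E)
    (hτ : 0 < τ) (hδ : 0 ≤ δ) (hm : 0 ≤ m) (hq : q ∈ Ioo 0 1) (hqτ : δ < τ * q) (hκ : 0 ≤ κ)
    (hκN : 6 * N * κ ≤ τ * q - δ) (hh : h ≤ 1) (hx₁κ : x₁ ≤ κ * h ^ 2)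
    (hx₁N : N ^ 2 * x₁ ≤ 4 * τ * m) (hμ : 0 < μ)
    (hcont : ContinuousOn ψ (Icc 0 x₁ ×ˢ Icc (y₀ - h) (y₀ + h)))
    (hnonneg : ∀ p ∈ Icc 0 x₁ ×ˢ Icc (y₀ - h) (y₀ + h), 0 ≤ ψ p)
    (hright : ∀ y ∈ Icc (y₀ - h) (y₀ + h), μ * x₁ ^ (q + 1) ≤ ψ (x₁, y))
    (hC2 : ∀ p ∈ Ioo 0 x₁ ×ˢ Ioo (y₀ - h) (y₀ + h), ContDiffAt ℝ 2 ψ p)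
    (hle : ∀ p ∈ Ioo 0 x₁ ×ˢ Ioo (y₀ - h) (y₀ + h), ellOp A B C D E ψ p ≤ 0) :
    ∀ p ∈ Icc 0 x₁ ×ˢ Icc (y₀ - h) (y₀ + h), μ * barrier q κ y₀ p ≤ ψ p := by
  set U := Ioo 0 x₁ ×ˢ Ioo (y₀ - h) (y₀ + h)
  suffices hdiff : ∀ p ∈ Icc 0 x₁ ×ˢ Icc (y₀ - h) (y₀ + h), 0 ≤ (ψ - μ • barrier q κ y₀) p from
    fun p hp => sub_nonneg.1 (hdiff p hp)
  refine nonneg_of_forall_not_isLocalMin (isCompact_Icc.prod isCompact_Icc)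
    (hcont.sub ((continuous_barrier hq.1).const_smul μ).continuousOn) ?_
  rintro p ⟨⟨hp₀, hp₁⟩, hp₂⟩ hneg
  have hlt : ψ p < μ * barrier q κ y₀ p := sub_neg.1 hneg
  have hparabola : κ * (p.2 - y₀) ^ 2 < p.1 := mul_sq_lt_of_barrier_pos hp₀
    (pos_of_mul_pos_right ((hnonneg p ⟨⟨hp₀, hp₁⟩, hp₂⟩).trans_lt hlt) hμ.le)
  have hp : 0 < p.1 := (by positivity : 0 ≤ κ * (p.2 - y₀) ^ 2).trans_lt hparabola
  have hpx₁ : p.1 < x₁ := by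
    refine hp₁.lt_of_ne fun heq => hlt.not_ge ?_
    calc μ * barrier q κ y₀ p ≤ μ * p.1 ^ (q + 1) := by gcongr; exact barrier_le_rpow hq.1 hκ hp₀
      _ = μ * x₁ ^ (q + 1) := by rw [heq]
      _ ≤ ψ (x₁, p.2) := hright p.2 hp₂
      _ = ψ p := by rw [← heq]
  have hph : |p.2 - y₀| < h := by
    refine abs_lt_of_sq_lt_sq (lt_of_mul_lt_mul_left ?_ hκ) (by linarith [hp₂.1, hp₂.2])
    exact hparabola.trans_le (hp₁.trans hx₁κ)
  have hpU : p ∈ U := by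
    obtain ⟨h₁, h₂⟩ := abs_lt.1 hph
    exact ⟨⟨hp, hpx₁⟩, by linarith, by linarith⟩
  refine ⟨mem_of_superset ((isOpen_Ioo.prod isOpen_Ioo).mem_nhds hpU)
    (prod_mono Ioo_subset_Icc_self Ioo_subset_Icc_self), ?_⟩
  have hA : 0 < A p := (mul_pos hτ hp).trans_le (hcoef.mul_fst_le_A p hpU)
  have hdisc := sq_le_of_isDegenerateElliptic hcoef hpU hp hτ hm
    ((mul_le_mul_of_nonneg_left hp₁ (sq_nonneg N)).trans hx₁N)
  refine not_isLocalMin_sub_of_ellOp_lt (A := A) (B := B) (C := C) (D := D) (E := E) hA hdisc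
    (hC2 p hpU) ((contDiffAt_barrier hp).const_smul μ) ((hle p hpU).trans_lt ?_)
  rw [ellOp_const_smul μ (contDiffAt_barrier hp)]
  exact mul_pos hμ (ellOp_barrier_pos hcoef hpU hp hτ.le hδ hq hqτ hκ hκN (hph.le.trans hh)
    hparabola)

theorem exists_barrier_parameters (N : ℝ) (hδ : 0 ≤ δ) (hδτ : δ < τ) :
    ∃ q ∈ Ioo (0 : ℝ) 1, δ < τ * q ∧ ∃ κ > 0, 6 * N * κ ≤ τ * q - δ := by
  have hτ : 0 < τ := hδ.trans_lt hδτ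
  obtain ⟨q, hδq, hq₁⟩ := exists_between ((div_lt_one hτ).2 hδτ)
  have hqτ : δ < τ * q := (div_lt_iff₀' hτ).1 hδq
  have : 0 < τ * q - δ := sub_pos.2 hqτ
  refine ⟨q, ⟨(div_nonneg hδ hτ.le).trans_lt hδq, hq₁⟩, hqτ, (τ * q - δ) / (6 * (|N| + 1)),
    by positivity, ?_⟩
  calc 6 * N * ((τ * q - δ) / (6 * (|N| + 1)))
      ≤ 6 * (|N| + 1) * ((τ * q - δ) / (6 * (|N| + 1))) := by gcongr; linarith [le_abs_self N]
    _ = τ * q - δ := mul_div_cancel₀ _ (by positivity)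

theorem exists_mul_rpow_le_of_ellOp_nonpos {r c d : ℝ} (hr : 0 < r) (hy₀ : y₀ ∈ Ioo c d)
    (hcoef : IsDegenerateElliptic τ δ m N (Ioo 0 r ×ˢ Ioo c d) A B C D E)
    (hδ : 0 ≤ δ) (hδτ : δ < τ) (hm : 0 < m) (hC2 : ContDiffOn ℝ 2 ψ (Ioo 0 r ×ˢ Ioo c d))
    (hcont : ContinuousOn ψ (Ico 0 r ×ˢ Ioo c d)) (hpos : ∀ p ∈ Ioo 0 r ×ˢ Ioo c d, 0 < ψ p)
    (hleft : ∀ y ∈ Ioo c d, 0 ≤ ψ (0, y))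
    (hle : ∀ p ∈ Ioo 0 r ×ˢ Ioo c d, ellOp A B C D E ψ p ≤ 0) :
    ∃ q ∈ Ioo (0 : ℝ) 1, ∃ μ > 0, ∀ᶠ x in 𝓝[>] 0, μ * x ^ (q + 1) ≤ ψ (x, y₀) := by
  have hτ : 0 < τ := hδ.trans_lt hδτ
  obtain ⟨q, hq, hqτ, κ, hκ, hκN⟩ := exists_barrier_parameters N hδ hδτ
  obtain ⟨ε, hε, hball⟩ := Metric.nhds_basis_closedBall.mem_iff.1 (Ioo_mem_nhds hy₀.1 hy₀.2)
  obtain ⟨h, hh₀, hh₁, hhε⟩ : ∃ h > 0, h ≤ 1 ∧ h ≤ ε :=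
    ⟨min 1 ε, by positivity, min_le_left 1 ε, min_le_right 1 ε⟩
  have hIcc : Icc (y₀ - h) (y₀ + h) ⊆ Ioo c d := by
    rw [← Real.closedBall_eq_Icc]
    exact (Metric.closedBall_subset_closedBall hhε).trans hball
  have hsmall : ∀ᶠ x in 𝓝[>] 0, x ≤ κ * h ^ 2 ∧ N ^ 2 * x ≤ 4 * τ * m :=
    nhdsWithin_le_nhds <| (eventually_le_nhds (by positivity)).and <|
      (Continuous.tendsto' (by fun_prop) 0 0 (mul_zero _)).eventually_le_const (by positivity)
  obtain ⟨x₁, ⟨hx₁κ, hx₁N⟩, hx₁, hx₁r⟩ := (hsmall.and (Ioo_mem_nhdsGT hr)).exists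
  have hU : Ioo 0 x₁ ×ˢ Ioo (y₀ - h) (y₀ + h) ⊆ Ioo 0 r ×ˢ Ioo c d :=
    prod_mono (Ioo_subset_Ioo_right hx₁r.le) (Ioo_subset_Icc_self.trans hIcc)
  have hK : Icc 0 x₁ ×ˢ Icc (y₀ - h) (y₀ + h) ⊆ Ico 0 r ×ˢ Ioo c d :=
    prod_mono (Icc_subset_Ico_right hx₁r) hIcc
  obtain ⟨z, ⟨hzx₁, hzy⟩, hz⟩ := ((isCompact_singleton (x := x₁)).prod
    (isCompact_Icc (a := y₀ - h) (b := y₀ + h))).exists_isMinOn ⟨(x₁, y₀), by simp [hh₀.le]⟩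
    (hcont.mono (prod_mono (singleton_subset_iff.2 ⟨hx₁.le, hx₁r⟩) hIcc))
  have hψz : 0 < ψ z := hpos z ⟨hzx₁ ▸ ⟨hx₁, hx₁r⟩, hIcc hzy⟩
  have hx₁q : 0 < x₁ ^ (q + 1) := Real.rpow_pos_of_pos hx₁ _
  have hcompare := mul_barrier_le_of_ellOp_nonpos (μ := ψ z / x₁ ^ (q + 1)) (hcoef.mono hU) hτ hδ
    hm.le hq hqτ hκ.le hκN hh₁ hx₁κ hx₁N (by positivity) (hcont.mono hK) ?_ ?_
    (fun p hp => hC2.contDiffAt ((isOpen_Ioo.prod isOpen_Ioo).mem_nhds (hU hp)))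
    (fun p hp => hle p (hU hp))
  · refine ⟨q, hq, ψ z / x₁ ^ (q + 1), by positivity, ?_⟩
    filter_upwards [Ioo_mem_nhdsGT hx₁] with x hx
    rw [← barrier_axis (κ := κ) (y₀ := y₀) hq.1 hx.1.le]
    exact hcompare _ ⟨Ioo_subset_Icc_self hx, by simp [hh₀.le]⟩
  · rintro ⟨x, y⟩ hp
    obtain rfl | hx := hp.1.1.eq_or_lt
    · exact hleft y (hIcc hp.2)
    · exact (hpos _ ⟨⟨hx, (hK hp).1.2⟩, hIcc hp.2⟩).le
  · intro y hy
    rw [div_mul_cancel₀ _ hx₁q.ne']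
    exact hz ⟨mem_singleton x₁, hy⟩

end Comparison

section MeanValue

variable {g g' : ℝ → ℝ} {c d k B : ℝ}

theorem mul_sub_le_sub_of_le_hasDerivAt (hcd : c ≤ d) (hg : ContinuousOn g (Icc c d))
    (hderiv : ∀ t ∈ Ioo c d, HasDerivAt g (g' t) t) (hk : ∀ t ∈ Ioo c d, k ≤ g' t) :
    k * (d - c) ≤ g d - g c := by
  refine (convex_Icc c d).mul_sub_le_image_sub_of_le_deriv hg ?_ ?_ c ⟨le_rfl, hcd⟩ d
    ⟨hcd, le_rfl⟩ hcd <;> rw [interior_Icc]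
  · exact fun t ht => (hderiv t ht).differentiableAt.differentiableWithinAt
  · exact fun t ht => (hderiv t ht).deriv ▸ hk t ht

theorem sub_le_mul_sub_of_hasDerivAt_le (hcd : c ≤ d) (hg : ContinuousOn g (Icc c d))
    (hderiv : ∀ t ∈ Ioo c d, HasDerivAt g (g' t) t) (hk : ∀ t ∈ Ioo c d, g' t ≤ k) :
    g d - g c ≤ k * (d - c) := by
  have h := mul_sub_le_sub_of_le_hasDerivAt hcd hg.neg (fun t ht => (hderiv t ht).neg)
    fun t ht => neg_le_neg (hk t ht)
  simp only [Pi.neg_apply] at h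
  linarith

theorem abs_sub_le_mul_sub_of_abs_hasDerivAt_le (hcd : c ≤ d) (hg : ContinuousOn g (Icc c d))
    (hderiv : ∀ t ∈ Ioo c d, HasDerivAt g (g' t) t) (hB : ∀ t ∈ Ioo c d, |g' t| ≤ B) :
    |g d - g c| ≤ B * (d - c) := by
  rw [abs_le, ← neg_mul]
  exact ⟨mul_sub_le_sub_of_le_hasDerivAt hcd hg hderiv fun t ht => (abs_le.1 (hB t ht)).1,
    sub_le_mul_sub_of_hasDerivAt_le hcd hg hderiv fun t ht => (abs_le.1 (hB t ht)).2⟩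

theorem abs_deriv_le_div_add_mul {g'' : ℝ → ℝ} (hcd : c < d) (hg : ContinuousOn g (Icc c d))
    (hg' : ContinuousOn g' (Icc c d)) (hderiv : ∀ t ∈ Ioo c d, HasDerivAt g (g' t) t)
    (hderiv' : ∀ t ∈ Ioo c d, HasDerivAt g' (g'' t) t) (hB : ∀ t ∈ Ioo c d, |g'' t| ≤ B) :
    |g' d| ≤ |g d - g c| / (d - c) + B * (d - c) := by
  obtain ⟨ξ, hξ, hslope⟩ := exists_hasDerivAt_eq_slope g g' hcd hg hderiv
  have hvar := abs_sub_le_mul_sub_of_abs_hasDerivAt_le hξ.2.le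
    (hg'.mono (Icc_subset_Icc_left hξ.1.le)) (fun t ht => hderiv' t ⟨hξ.1.trans ht.1, ht.2⟩)
    fun t ht => hB t ⟨hξ.1.trans ht.1, ht.2⟩
  have hB₀ : 0 ≤ B := (abs_nonneg _).trans (hB ξ hξ)
  calc |g' d| ≤ |g' ξ| + |g' d - g' ξ| := by linarith [abs_sub_abs_le_abs_sub (g' d) (g' ξ)]
    _ ≤ |g d - g c| / (d - c) + B * (d - c) := by
      rw [hslope, abs_div, abs_of_pos (sub_pos.2 hcd)] at *
      gcongr
      exact hvar.trans (by gcongr; exact hξ.1.le)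

theorem eventually_forall_Ioc_of_eventually {P : ℝ → Prop} {x₀ : ℝ} (h : ∀ᶠ x in 𝓝[>] x₀, P x) :
    ∀ᶠ x in 𝓝[>] x₀, ∀ z ∈ Ioc x₀ x, P z := by
  obtain ⟨r, hr, hP⟩ := (nhdsGT_basis x₀).eventually_iff.1 h
  filter_upwards [Ioo_mem_nhdsGT hr] with x hx z hz using hP ⟨hz.1, hz.2.trans_lt hx.2⟩

theorem not_eventually_mul_rpow_le_mul_rpow {p q C : ℝ} (hc : 0 < c) (hpq : p < q) :
    ¬ ∀ᶠ x in 𝓝[>] (0 : ℝ), c * x ^ p ≤ C * x ^ q := by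
  intro h
  have htendsto : Tendsto (fun x : ℝ => C * x ^ (q - p)) (𝓝[>] 0) (𝓝 0) := by
    have h₀ := (Real.continuousAt_rpow_const 0 (q - p) (.inr (sub_pos.2 hpq).le)).tendsto
    rw [Real.zero_rpow (sub_pos.2 hpq).ne'] at h₀
    simpa using (h₀.mono_left nhdsWithin_le_nhds).const_mul C
  refine hc.not_ge (ge_of_tendsto htendsto ?_)
  filter_upwards [h, self_mem_nhdsWithin] with x hx (hx₀ : 0 < x)
  rw [Real.rpow_sub hx₀, ← mul_div_assoc]
  exact (le_div_iff₀ (Real.rpow_pos_of_pos hx₀ p)).2 hx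

end MeanValue

section SonicDomain

/-- The hypotheses on the upper boundary `y = f x` of `Qset ε₀ f`: it is a Lipschitz graph,
differentiable for `x > 0`, whose left endpoint `(0, f 0)` is its strictly lowest point. -/
structure IsSonicDomain (ε₀ : ℝ) (F : ℝ≥0) (f : ℝ → ℝ) : Prop where
  pos : 0 < ε₀
  f_zero_pos : 0 < f 0
  f_zero_lt : ∀ x ∈ Ioo 0 ε₀, f 0 < f x
  lipschitzOnWith : LipschitzOnWith F f (Icc 0 ε₀)
  differentiableAt : ∀ x ∈ Ioo 0 ε₀, DifferentiableAt ℝ f x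

theorem hasBasis_nhdsGT_prod_nhdsLE (x₀ y₀ : ℝ) : (𝓝[>] x₀ ×ˢ 𝓝[≤] y₀).HasBasis (fun r => 0 < r)
    fun r => Ioo x₀ (x₀ + r) ×ˢ Ioc (y₀ - r) y₀ := by
  have hGT : (𝓝[>] x₀).HasBasis (fun r => 0 < r) fun r => Ioo x₀ (x₀ + r) :=
    (nhdsGT_basis x₀).to_hasBasis (fun x hx => ⟨x - x₀, sub_pos.2 hx, by simp⟩)
      fun r hr => ⟨x₀ + r, by simpa, subset_rfl⟩
  have hLE : (𝓝[≤] y₀).HasBasis (fun r => 0 < r) fun r => Ioc (y₀ - r) y₀ :=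
    (nhdsLE_basis y₀).to_hasBasis (fun y hy => ⟨y₀ - y, sub_pos.2 hy, by simp⟩)
      fun r hr => ⟨y₀ - r, by simpa, subset_rfl⟩
  refine hGT.prod_same_index hLE fun {r s} hr hs => ⟨min r s, lt_min hr hs, ?_, ?_⟩
  · exact Ioo_subset_Ioo_right (by gcongr; exact min_le_left r s)
  · exact Ioc_subset_Ioc_left (by gcongr; exact min_le_right r s)

namespace IsSonicDomain

variable {ε₀ : ℝ} {F : ℝ≥0} {f : ℝ → ℝ} {x y : ℝ} {P : ℝ × ℝ → Prop}

theorem isOpen_Qset (hQ : IsSonicDomain ε₀ F f) : IsOpen (Qset ε₀ f) := by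
  have hcont : ContinuousOn (fun p : ℝ × ℝ => f p.1 - p.2) (Ioo 0 ε₀ ×ˢ Ioi 0) :=
    (hQ.lipschitzOnWith.continuousOn.comp continuousOn_fst
      fun p hp => Ioo_subset_Icc_self hp.1).sub continuousOn_snd
  convert hcont.isOpen_inter_preimage (isOpen_Ioo.prod isOpen_Ioi) (isOpen_Ioi (a := 0)) using 1
  ext p
  simp [Qset, and_assoc]

theorem closure_mem_nhds (hQ : IsSonicDomain ε₀ F f) {p : ℝ × ℝ} (hp : p ∈ Qset ε₀ f) :
    closure (Qset ε₀ f) ∈ 𝓝 p :=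
  mem_of_superset (hQ.isOpen_Qset.mem_nhds hp) subset_closure

theorem f_zero_le (hQ : IsSonicDomain ε₀ F f) (hx : x ∈ Ico 0 ε₀) : f 0 ≤ f x := by
  obtain rfl | hx₀ := hx.1.eq_or_lt
  · exact le_rfl
  · exact (hQ.f_zero_lt x ⟨hx₀, hx.2⟩).le

theorem sub_le_mul (hQ : IsSonicDomain ε₀ F f) (hx : x ∈ Icc 0 ε₀) : f x - f 0 ≤ F * x := by
  have h := hQ.lipschitzOnWith.dist_le_mul x hx 0 ⟨le_rfl, hQ.pos.le⟩
  rw [Real.dist_eq, Real.dist_eq, sub_zero, abs_of_nonneg hx.1] at h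
  exact (le_abs_self _).trans h

theorem abs_deriv_le (hQ : IsSonicDomain ε₀ F f) (hx : x ∈ Ioo 0 ε₀) : |deriv f x| ≤ F :=
  norm_deriv_le_of_lipschitzOn (Icc_mem_nhds hx.1 hx.2) hQ.lipschitzOnWith

theorem mk_mem_Qset (hQ : IsSonicDomain ε₀ F f) (hx : x ∈ Ioo 0 ε₀) (hy : y ∈ Ioc 0 (f 0)) :
    (x, y) ∈ Qset ε₀ f :=
  ⟨hx.1, hx.2, hy.1, hy.2.trans_lt (hQ.f_zero_lt x hx)⟩

theorem mk_mem_closure (hQ : IsSonicDomain ε₀ F f) (hx : x ∈ Ico 0 ε₀) (hy : y ∈ Ioc 0 (f x)) :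
    (x, y) ∈ closure (Qset ε₀ f) := by
  obtain rfl | hx₀ := hx.1.eq_or_lt
  · refine mem_closure_of_tendsto (b := 𝓝[>] (0 : ℝ)) (f := fun z => (z, y)) ?_ ?_
    · exact (Continuous.tendsto' (by fun_prop) 0 (0, y) rfl).mono_left nhdsWithin_le_nhds
    · filter_upwards [Ioo_mem_nhdsGT hQ.pos] with z hz using hQ.mk_mem_Qset hz hy
  · refine mem_closure_of_tendsto (b := 𝓝[<] y) (f := fun z => (x, z)) ?_ ?_
    · exact (Continuous.tendsto' (by fun_prop) y (x, y) rfl).mono_left nhdsWithin_le_nhds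
    · filter_upwards [Ioo_mem_nhdsLT hy.1] with z hz using
        ⟨hx₀, hx.2, hz.1, hz.2.trans_le hy.2⟩

theorem eventually_mem_Ioo (hQ : IsSonicDomain ε₀ F f) : ∀ᶠ x in 𝓝[>] 0, x ∈ Ioo 0 ε₀ :=
  Ioo_mem_nhdsGT hQ.pos

theorem nhdsGT_prod_nhdsLE_le (hQ : IsSonicDomain ε₀ F f) :
    𝓝[>] 0 ×ˢ 𝓝[≤] (f 0) ≤ 𝓝[Qset ε₀ f] (0, f 0) := by
  refine le_inf ?_ (le_principal_iff.2 ?_)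
  · rw [nhds_prod_eq]
    exact prod_mono nhdsWithin_le_nhds nhdsWithin_le_nhds
  filter_upwards [prod_mem_prod hQ.eventually_mem_Ioo (Ioc_mem_nhdsLE hQ.f_zero_pos)] with p hp
    using hQ.mk_mem_Qset hp.1 hp.2

theorem exists_box (hQ : IsSonicDomain ε₀ F f) (hP : ∀ᶠ p in 𝓝[Qset ε₀ f] (0, f 0), P p) :
    ∃ r > 0, ∀ p ∈ Ioo 0 r ×ˢ Ioc (f 0 - r) (f 0), p ∈ Qset ε₀ f ∧ P p := by
  have h := hQ.nhdsGT_prod_nhdsLE_le (eventually_mem_nhdsWithin.and hP)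
  simpa only [zero_add] using (hasBasis_nhdsGT_prod_nhdsLE 0 (f 0)).eventually_iff.1 h

theorem exists_strip (hQ : IsSonicDomain ε₀ F f) (hP : ∀ᶠ p in 𝓝[Qset ε₀ f] (0, f 0), P p) :
    ∃ r ∈ Ioo 0 (f 0), ∀ᶠ x in 𝓝[>] 0, ∀ y ∈ Ioo (f 0 - r) (f x), P (x, y) := by
  obtain ⟨ε, hε, hball⟩ := Metric.mem_nhdsWithin_iff.1 hP
  obtain ⟨r, hr₀, hr⟩ := exists_between (lt_min hε hQ.f_zero_pos)
  have hf : Tendsto f (𝓝[>] 0) (𝓝 (f 0)) :=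
    ((hQ.lipschitzOnWith.continuousOn 0 ⟨le_rfl, hQ.pos.le⟩).mono_of_mem_nhdsWithin
      (mem_of_superset hQ.eventually_mem_Ioo Ioo_subset_Icc_self))
  refine ⟨r, ⟨hr₀, hr.trans_le (min_le_right _ _)⟩, ?_⟩
  filter_upwards [hQ.eventually_mem_Ioo, Ioo_mem_nhdsGT hε,
    hf.eventually_lt_const (lt_add_of_pos_right (f 0) hε)] with x hx hxε hfx y hy
  have hrε : r < ε := hr.trans_le (min_le_left _ _)
  have hrf : r < f 0 := hr.trans_le (min_le_right _ _)
  refine hball ⟨?_, hx.1, hx.2, (sub_pos.2 hrf).trans hy.1, hy.2⟩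
  rw [← ball_prod_same, Real.ball_eq_Ioo, Real.ball_eq_Ioo]
  exact ⟨⟨by linarith [hx.1], by linarith [hxε.2]⟩, by linarith [hy.1], hy.2.trans hfx⟩

end IsSonicDomain

end SonicDomain

section Estimates

/-- `ψ` is a positive solution vanishing on `x = 0` of the quasilinear equation
`(2 x - a ψₓ + O₁) ψₓₓ + O₂ ψₓ_y + (b + O₃) ψ_yy - (1 + O₄) ψₓ + O₅ ψ_y = 0`, where the `Oᵢ` are
of lower order at `(0, f 0)`. The oblique condition on `y = f x` only enters as a bound of `ψₓ`
by `ψ_y` and `ψ`. -/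
structure IsSonicSolution (ε₀ a b L : ℝ) (K : ℝ≥0) (f : ℝ → ℝ) (O₁ O₂ O₃ O₄ O₅ ψ : ℝ × ℝ → ℝ) :
    Prop where
  contDiffOn : ContDiffOn ℝ 2 ψ (Qset ε₀ f)
  continuousOn : ContinuousOn ψ (closure (Qset ε₀ f))
  lipschitzOnWith_pd1 : LipschitzOnWith K (pd1 ψ) (closure (Qset ε₀ f))
  lipschitzOnWith_pd2 : LipschitzOnWith K (pd2 ψ) (closure (Qset ε₀ f))
  pos : ∀ p ∈ Qset ε₀ f, 0 < ψ p
  eq_zero : ∀ p ∈ closure (Qset ε₀ f), p.1 = 0 → ψ p = 0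
  isBigO_pd1 : pd1 ψ =O[𝓝[Qset ε₀ f] (0, f 0)] Prod.fst
  isLittleO_O₁ : O₁ =o[𝓝[Qset ε₀ f] (0, f 0)] Prod.fst
  isBigO_O₂ : O₂ =O[𝓝[Qset ε₀ f] (0, f 0)] Prod.fst
  tendsto_O₃ : Tendsto O₃ (𝓝[Qset ε₀ f] (0, f 0)) (𝓝 0)
  tendsto_O₄ : Tendsto O₄ (𝓝[Qset ε₀ f] (0, f 0)) (𝓝 0)
  isBigO_O₅ : O₅ =O[𝓝[Qset ε₀ f] (0, f 0)] Prod.fst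
  ellOp_eq_zero : ∀ p ∈ Qset ε₀ f, ellOp (fun z => 2 * z.1 - a * pd1 ψ z + O₁ z) O₂
    (fun z => b + O₃ z) (fun z => -(1 + O₄ z)) O₅ ψ p = 0
  oblique : ∀ x ∈ Ioo 0 ε₀, |pd1 ψ (x, f x)| ≤ L * (|pd2 ψ (x, f x)| + |ψ (x, f x)|)

variable {ε₀ a b L : ℝ} {K F : ℝ≥0} {f : ℝ → ℝ} {O₁ O₂ O₃ O₄ O₅ ψ : ℝ × ℝ → ℝ} {p : ℝ × ℝ}

namespace IsSonicSolution

theorem contDiffAt (hψ : IsSonicSolution ε₀ a b L K f O₁ O₂ O₃ O₄ O₅ ψ)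
    (hQ : IsSonicDomain ε₀ F f) (hp : p ∈ Qset ε₀ f) : ContDiffAt ℝ 2 ψ p :=
  hψ.contDiffOn.contDiffAt (hQ.isOpen_Qset.mem_nhds hp)

theorem differentiableAt (hψ : IsSonicSolution ε₀ a b L K f O₁ O₂ O₃ O₄ O₅ ψ)
    (hQ : IsSonicDomain ε₀ F f) (hp : p ∈ Qset ε₀ f) : DifferentiableAt ℝ ψ p :=
  (hψ.contDiffAt hQ hp).differentiableAt two_ne_zero

theorem isBigO_pd2_pd2 (hψ : IsSonicSolution ε₀ a b L K f O₁ O₂ O₃ O₄ O₅ ψ)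
    (hQ : IsSonicDomain ε₀ F f) (hb : b ≠ 0) :
    pd2 (pd2 ψ) =O[𝓝[Qset ε₀ f] (0, f 0)] Prod.fst := by
  set l := 𝓝[Qset ε₀ f] (0, f 0)
  have hone {u : ℝ × ℝ → ℝ} {M : ℝ} (hu : ∀ p ∈ Qset ε₀ f, |u p| ≤ M) : u =O[l] (1 : ℝ × ℝ → ℝ) :=
    .of_bound M (by simpa using eventually_mem_nhdsWithin.mono hu)
  have hxx : pd1 (pd1 ψ) =O[l] (1 : ℝ × ℝ → ℝ) := hone fun p hp =>
    abs_pd1_le_of_lipschitzOnWith hψ.lipschitzOnWith_pd1 (hQ.closure_mem_nhds hp)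
  have hxy : pd2 (pd1 ψ) =O[l] (1 : ℝ × ℝ → ℝ) := hone fun p hp =>
    abs_pd2_le_of_lipschitzOnWith hψ.lipschitzOnWith_pd1 (hQ.closure_mem_nhds hp)
  have hy : pd2 ψ =O[l] (1 : ℝ × ℝ → ℝ) :=
    ((hψ.lipschitzOnWith_pd2.continuousOn _ (hQ.mk_mem_closure ⟨le_rfl, hQ.pos⟩
      ⟨hQ.f_zero_pos, le_rfl⟩)).mono_left (nhdsWithin_mono _ subset_closure)).isBigO_one ℝ
  have hD : (fun p => -(1 + O₄ p)) =O[l] (1 : ℝ × ℝ → ℝ) :=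
    (hψ.tendsto_O₄.const_add 1).neg.isBigO_one ℝ
  have hA : (fun p => 2 * p.1 - a * pd1 ψ p + O₁ p) =O[l] Prod.fst :=
    (((isBigO_refl Prod.fst l).const_mul_left 2).sub (hψ.isBigO_pd1.const_mul_left a)).add
      hψ.isLittleO_O₁.isBigO
  have hlimC : Tendsto (fun p => b + O₃ p) l (𝓝 b) := by simpa using hψ.tendsto_O₃.const_add b
  have hrest := (((hA.mul hxx).add (hψ.isBigO_O₂.mul hxy)).add
    (hψ.isBigO_pd1.mul hD)).add (hψ.isBigO_O₅.mul hy)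
  have hmul := ((hlimC.inv₀ hb).isBigO_one ℝ).mul hrest.neg_left
  refine (hmul.congr' ?_ ?_)
  · filter_upwards [eventually_mem_nhdsWithin, hlimC.eventually_ne hb] with p hp hC
    have heq := hψ.ellOp_eq_zero p hp
    simp only [ellOp] at heq
    rw [inv_mul_eq_iff_eq_mul₀ hC]
    linear_combination -heq
  · exact .of_forall fun p => by simp

theorem eventually_pd1_zero_left (hψ : IsSonicSolution ε₀ a b L K f O₁ O₂ O₃ O₄ O₅ ψ)
    (hQ : IsSonicDomain ε₀ F f) : ∀ᶠ y in 𝓝[≤] (f 0), pd1 ψ (0, y) = 0 := by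
  obtain ⟨M, hM⟩ := hψ.isBigO_pd1.bound
  obtain ⟨r, hr, hbox⟩ := hQ.exists_box hM
  filter_upwards [Ioc_mem_nhdsLE (sub_lt_self (f 0) hr), Ioc_mem_nhdsLE hQ.f_zero_pos] with y hy hy₀
  have hmem : ∀ᶠ x in 𝓝[>] 0, (x, y) ∈ closure (Qset ε₀ f) :=
    hQ.eventually_mem_Ioo.mono fun x hx => subset_closure (hQ.mk_mem_Qset hx hy₀)
  have hlim : Tendsto (fun x => pd1 ψ (x, y)) (𝓝[>] 0) (𝓝 (pd1 ψ (0, y))) :=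
    (hψ.lipschitzOnWith_pd1.continuousOn _ (hQ.mk_mem_closure ⟨le_rfl, hQ.pos⟩ hy₀)).tendsto.comp
      (tendsto_nhdsWithin_iff.2 ⟨(Continuous.tendsto' (by fun_prop) 0 (0, y) rfl).mono_left
        nhdsWithin_le_nhds, hmem⟩)
  refine tendsto_nhds_unique hlim (squeeze_zero_norm' (a := fun x => M * ‖x‖) ?_ ?_)
  · filter_upwards [Ioo_mem_nhdsGT hr] with x hx using (hbox (x, y) ⟨hx, hy⟩).2
  · exact (Continuous.tendsto' (by fun_prop) 0 0 (by simp)).mono_left nhdsWithin_le_nhds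

theorem pd2_zero_f_zero (hψ : IsSonicSolution ε₀ a b L K f O₁ O₂ O₃ O₄ O₅ ψ)
    (hQ : IsSonicDomain ε₀ F f) : pd2 ψ (0, f 0) = 0 := by
  have hmem {y : ℝ} (hy : y ∈ Ioc 0 (f 0)) : (0, y) ∈ closure (Qset ε₀ f) :=
    hQ.mk_mem_closure ⟨le_rfl, hQ.pos⟩ hy
  have hzero : ∀ y ∈ Ioo 0 (f 0), pd2 ψ (0, y) = 0 := by
    intro y hy
    have hloc : (fun t => ψ (0, t)) =ᶠ[𝓝 y] fun _ => 0 := by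
      filter_upwards [Ioo_mem_nhds hy.1 hy.2] with t ht
        using hψ.eq_zero _ (hmem (Ioo_subset_Ioc_self ht)) rfl
    exact hloc.deriv_eq.trans (deriv_const y 0)
  have hcont : ContinuousOn (fun y => pd2 ψ (0, y)) (Ioc 0 (f 0)) :=
    hψ.lipschitzOnWith_pd2.continuousOn.comp (by fun_prop) fun y hy => hmem hy
  refine EqOn.of_subset_closure (g := fun _ => 0) hzero hcont continuousOn_const
    Ioo_subset_Ioc_self ?_ ⟨hQ.f_zero_pos, le_rfl⟩
  rw [closure_Ioo hQ.f_zero_pos.ne]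
  exact Ioc_subset_Icc_self

theorem continuousOn_prodMk_left (hψ : IsSonicSolution ε₀ a b L K f O₁ O₂ O₃ O₄ O₅ ψ)
    (hQ : IsSonicDomain ε₀ F f) {c x y : ℝ} (hx : x ∈ Ico 0 ε₀) (hc : 0 < c) (hy : y ≤ f x) :
    ContinuousOn (fun t => ψ (x, t)) (Icc c y) :=
  hψ.continuousOn.comp (by fun_prop)
    fun _ ht => hQ.mk_mem_closure hx ⟨hc.trans_le ht.1, ht.2.trans hy⟩

theorem abs_sub_vertical_le (hψ : IsSonicSolution ε₀ a b L K f O₁ O₂ O₃ O₄ O₅ ψ)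
    (hQ : IsSonicDomain ε₀ F f) {B c d x : ℝ} (hx : x ∈ Ioo 0 ε₀) (hc : 0 < c) (hcd : c ≤ d)
    (hd : d ≤ f x) (hB : ∀ t ∈ Ioo c d, |pd2 ψ (x, t)| ≤ B) :
    |ψ (x, d) - ψ (x, c)| ≤ B * (d - c) :=
  abs_sub_le_mul_sub_of_abs_hasDerivAt_le hcd
    (hψ.continuousOn_prodMk_left hQ (Ioo_subset_Ico_self hx) hc hd)
    (fun _ ht => hasDerivAt_pd2 (hψ.differentiableAt hQ
      ⟨hx.1, hx.2, hc.trans ht.1, ht.2.trans_le hd⟩)) hB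

theorem isBigO_sq (hψ : IsSonicSolution ε₀ a b L K f O₁ O₂ O₃ O₄ O₅ ψ)
    (hQ : IsSonicDomain ε₀ F f) : ψ =O[𝓝[>] 0 ×ˢ 𝓝[≤] (f 0)] fun p => p.1 ^ 2 := by
  obtain ⟨M, hM₀, hM⟩ := hψ.isBigO_pd1.exists_nonneg
  obtain ⟨r, hr, hbox⟩ := hQ.exists_box hM.bound
  refine .of_bound M ?_
  refine (hasBasis_nhdsGT_prod_nhdsLE 0 (f 0)).eventually_iff.2 ⟨r, hr, fun p ⟨hx, hy⟩ => ?_⟩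
  rw [zero_add] at hx
  have hmem {t : ℝ} (ht : t ∈ Ioc 0 p.1) := hbox (t, p.2) ⟨⟨ht.1, ht.2.trans_lt hx.2⟩, hy⟩
  have hzero : (0, p.2) ∈ closure (Qset ε₀ f) :=
    hQ.mk_mem_closure ⟨le_rfl, hQ.pos⟩ ⟨(hmem ⟨hx.1, le_rfl⟩).1.2.2.1, hy.2⟩
  have hcont : ContinuousOn (fun t => ψ (t, p.2)) (Icc 0 p.1) := by
    refine hψ.continuousOn.comp (by fun_prop) fun t ht => ?_
    obtain rfl | ht₀ := ht.1.eq_or_lt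
    exacts [hzero, subset_closure (hmem ⟨ht₀, ht.2⟩).1]
  have h := abs_sub_le_mul_sub_of_abs_hasDerivAt_le hx.1.le hcont
    (fun t ht => hasDerivAt_pd1 (hψ.differentiableAt hQ (hmem (Ioo_subset_Ioc_self ht)).1))
    (B := M * p.1) fun t ht => (hmem (Ioo_subset_Ioc_self ht)).2.trans (by
      rw [Real.norm_of_nonneg ht.1.le]
      gcongr
      exact ht.2.le)
  rw [hψ.eq_zero _ hzero rfl, sub_zero, sub_zero] at h
  simpa [sq, mul_assoc] using h

theorem abs_pd2_le (hψ : IsSonicSolution ε₀ a b L K f O₁ O₂ O₃ O₄ O₅ ψ)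
    (hQ : IsSonicDomain ε₀ F f) {x y : ℝ} (hx : x ∈ Ioo 0 ε₀) (hy : y ∈ Icc (f 0) (f x)) :
    |pd2 ψ (x, y)| ≤ K * ((1 + F) * x) := by
  have h := hψ.lipschitzOnWith_pd2.dist_le_mul _ (hQ.mk_mem_closure (Ioo_subset_Ico_self hx)
    ⟨hQ.f_zero_pos.trans_le hy.1, hy.2⟩) _
    (hQ.mk_mem_closure ⟨le_rfl, hQ.pos⟩ ⟨hQ.f_zero_pos, le_rfl⟩)
  rw [hψ.pd2_zero_f_zero hQ, Real.dist_eq, sub_zero] at h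
  refine h.trans (mul_le_mul_of_nonneg_left ?_ K.2)
  have hFx : 0 ≤ F * x := mul_nonneg F.2 hx.1.le
  rw [Prod.dist_eq, Real.dist_eq, Real.dist_eq, sub_zero, abs_of_pos hx.1,
    abs_of_nonneg (sub_nonneg.2 hy.1)]
  exact max_le (by linarith) (by linarith [hQ.sub_le_mul (Ioo_subset_Icc_self hx), hy.2, hx.1])

theorem exists_strip_abs_le_mul_sq (hψ : IsSonicSolution ε₀ a b L K f O₁ O₂ O₃ O₄ O₅ ψ)
    (hQ : IsSonicDomain ε₀ F f) : ∃ C, ∃ r ∈ Ioo 0 (f 0), ∀ᶠ x in 𝓝[>] 0,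
      ∀ y ∈ Ioc (f 0 - r) (f x), |ψ (x, y)| ≤ C * x ^ 2 := by
  obtain ⟨M, hM⟩ := (hψ.isBigO_sq hQ).bound
  obtain ⟨r', hr', hbox⟩ := (hasBasis_nhdsGT_prod_nhdsLE 0 (f 0)).eventually_iff.1 hM
  obtain ⟨r, hr, hrr'⟩ := exists_between (lt_min hr' hQ.f_zero_pos)
  rw [zero_add] at hbox
  have hlow {x y : ℝ} (hx : x ∈ Ioo 0 r') (hy : y ∈ Ioc (f 0 - r) (f 0)) :
      |ψ (x, y)| ≤ M * x ^ 2 := by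
    simpa using hbox (x := (x, y)) ⟨hx, by linarith [hy.1, hrr'.trans_le (min_le_left _ _)], hy.2⟩
  refine ⟨M + K * (1 + F) * F, r, ⟨hr, hrr'.trans_le (min_le_right _ _)⟩, ?_⟩
  filter_upwards [hQ.eventually_mem_Ioo, Ioo_mem_nhdsGT hr'] with x hx hxr y hy
  have hnonneg : 0 ≤ K * (1 + F) * F * x ^ 2 := by positivity
  rcases le_or_gt y (f 0) with hy₀ | hy₀
  · linarith [hlow hxr ⟨hy.1, hy₀⟩]
  have hvar := hψ.abs_sub_vertical_le hQ hx hQ.f_zero_pos hy₀.le hy.2 fun t ht =>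
    hψ.abs_pd2_le hQ hx ⟨ht.1.le, ht.2.le.trans hy.2⟩
  have hheight : y - f 0 ≤ F * x := by linarith [hQ.sub_le_mul (Ioo_subset_Icc_self hx), hy.2]
  calc |ψ (x, y)| ≤ |ψ (x, f 0)| + |ψ (x, y) - ψ (x, f 0)| := by
        linarith [abs_sub_abs_le_abs_sub (ψ (x, y)) (ψ (x, f 0))]
    _ ≤ M * x ^ 2 + K * ((1 + F) * x) * (F * x) := by
        gcongr
        · exact hlow hxr ⟨sub_lt_self _ hr, le_rfl⟩
        · exact hvar.trans (mul_le_mul_of_nonneg_left hheight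
            (mul_nonneg K.2 (mul_nonneg (by positivity) hx.1.le)))
    _ = (M + K * (1 + F) * F) * x ^ 2 := by ring

theorem eventually_abs_pd2_le (hψ : IsSonicSolution ε₀ a b L K f O₁ O₂ O₃ O₄ O₅ ψ)
    (hQ : IsSonicDomain ε₀ F f) (hb : b ≠ 0) {η : ℝ} (hη : 0 < η) :
    ∀ᶠ x in 𝓝[>] 0, ∀ y ∈ Icc (f 0) (f x), |pd2 ψ (x, y)| ≤ η * x := by
  obtain ⟨B, hB₀, hB⟩ := (hψ.isBigO_pd2_pd2 hQ hb).exists_pos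
  obtain ⟨r₁, hr₁, hyy⟩ := hQ.exists_strip hB.bound
  obtain ⟨C, r₂, hr₂, hsq⟩ := hψ.exists_strip_abs_le_mul_sq hQ
  obtain ⟨h, hh, hhr⟩ := exists_between
    (lt_min (lt_min hr₁.1 hr₂.1) (div_pos hη (mul_pos two_pos hB₀)))
  simp only [lt_min_iff, lt_div_iff₀ (mul_pos two_pos hB₀)] at hhr
  have hsmall : ∀ᶠ x in 𝓝[>] (0 : ℝ), 2 * C * x / h < η / 2 := by
    have hlim : Tendsto (fun x : ℝ => 2 * C * x / h) (𝓝[>] 0) (𝓝 0) :=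
      (Continuous.tendsto' (by fun_prop) 0 0 (by simp)).mono_left nhdsWithin_le_nhds
    exact hlim.eventually_lt_const (half_pos hη)
  filter_upwards [hQ.eventually_mem_Ioo, hyy, hsq, hsmall] with x hx hyy hsq hsmall y hy
  have hpos : 0 < y - h := by linarith [hy.1, hr₁.2]
  have hQy {t : ℝ} (ht : t ∈ Ioo (y - h) y) : (x, t) ∈ Qset ε₀ f :=
    ⟨hx.1, hx.2, hpos.trans ht.1, ht.2.trans_le hy.2⟩
  have hinterp := abs_deriv_le_div_add_mul (sub_lt_self y hh)
    (hψ.continuousOn_prodMk_left hQ (Ioo_subset_Ico_self hx) hpos hy.2)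
    (hψ.lipschitzOnWith_pd2.continuousOn.comp (by fun_prop) fun t ht =>
      hQ.mk_mem_closure (Ioo_subset_Ico_self hx) ⟨hpos.trans_le ht.1, ht.2.trans hy.2⟩)
    (fun t ht => hasDerivAt_pd2 (hψ.differentiableAt hQ (hQy ht)))
    (fun t ht => hasDerivAt_pd2 (differentiableAt_pd2 (hψ.contDiffAt hQ (hQy ht))))
    (B := B * x) fun t ht => by
      simpa [abs_of_pos hx.1] using hyy t ⟨by linarith [ht.1, hy.1], ht.2.trans_le hy.2⟩
  have hvar : |ψ (x, y) - ψ (x, y - h)| ≤ 2 * C * x ^ 2 := by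
    have h₁ := hsq y ⟨by linarith [hy.1], hy.2⟩
    have h₂ := hsq (y - h) ⟨by linarith [hy.1], by linarith [hy.2]⟩
    linarith [abs_sub (ψ (x, y)) (ψ (x, y - h))]
  rw [sub_sub_cancel] at hinterp
  calc |pd2 ψ (x, y)| ≤ 2 * C * x ^ 2 / h + B * x * h := hinterp.trans (by gcongr)
    _ = (2 * C * x / h + h * (2 * B) / 2) * x := by ring
    _ ≤ η * x := mul_le_mul_of_nonneg_right (by linarith) hx.1.le

theorem eventually_abs_pd1_le (hψ : IsSonicSolution ε₀ a b L K f O₁ O₂ O₃ O₄ O₅ ψ)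
    (hQ : IsSonicDomain ε₀ F f) (hb : b ≠ 0) {η : ℝ} (hη : 0 < η) :
    ∀ᶠ x in 𝓝[>] 0, |pd1 ψ (x, f x)| ≤ η * x := by
  obtain ⟨C, r, hr, hsq⟩ := hψ.exists_strip_abs_le_mul_sq hQ
  have hη' : 0 < η / (2 * (|L| + 1)) := by positivity
  have hsmall : ∀ᶠ x in 𝓝[>] (0 : ℝ), C * x < η / (2 * (|L| + 1)) := by
    have hlim : Tendsto (fun x : ℝ => C * x) (𝓝[>] 0) (𝓝 0) :=
      (Continuous.tendsto' (by fun_prop) 0 0 (by simp)).mono_left nhdsWithin_le_nhds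
    exact hlim.eventually_lt_const hη'
  filter_upwards [hQ.eventually_mem_Ioo, hsq, hψ.eventually_abs_pd2_le hQ hb hη', hsmall]
    with x hx hsq hy hsmall
  have hfx := hQ.f_zero_lt x hx
  have hψx : |ψ (x, f x)| ≤ η / (2 * (|L| + 1)) * x := by
    refine (hsq (f x) ⟨by linarith [hr.1], le_rfl⟩).trans ?_
    rw [sq, ← mul_assoc]
    exact mul_le_mul_of_nonneg_right hsmall.le hx.1.le
  calc |pd1 ψ (x, f x)| ≤ L * (|pd2 ψ (x, f x)| + |ψ (x, f x)|) := hψ.oblique x hx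
    _ ≤ (|L| + 1) * (η / (2 * (|L| + 1)) * x + η / (2 * (|L| + 1)) * x) := by
        gcongr
        · linarith [le_abs_self L]
        · exact hy (f x) ⟨hfx.le, le_rfl⟩
    _ = η * x := by field_simp; ring

theorem abs_apply_sub_le (hψ : IsSonicSolution ε₀ a b L K f O₁ O₂ O₃ O₄ O₅ ψ)
    (hQ : IsSonicDomain ε₀ F f) {η s x : ℝ} (hx : x ∈ Ioo 0 ε₀) (hs : s ∈ Ioo 0 (f 0))
    (hη : 0 ≤ η) (h₁ : ∀ z ∈ Ioo 0 x, |pd1 ψ (z, f z)| ≤ η * z)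
    (h₂ : ∀ z ∈ Ioo 0 x, |pd2 ψ (z, f z)| ≤ η * z) :
    |ψ (x, f x - s)| ≤ (1 + F) * (η * x + K * s) * x := by
  have hfs {z : ℝ} (hz : z ∈ Icc 0 x) : f z - s ∈ Ioo 0 (f z) :=
    ⟨by linarith [hQ.f_zero_le ⟨hz.1, hz.2.trans_lt hx.2⟩, hs.2], sub_lt_self _ hs.1⟩
  have hcl {z : ℝ} (hz : z ∈ Icc 0 x) : (z, f z - s) ∈ closure (Qset ε₀ f) :=
    hQ.mk_mem_closure ⟨hz.1, hz.2.trans_lt hx.2⟩ (Ioo_subset_Ioc_self (hfs hz))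
  have hcont : ContinuousOn (fun z => ψ (z, f z - s)) (Icc 0 x) :=
    hψ.continuousOn.comp (continuousOn_id.prodMk ((hQ.lipschitzOnWith.continuousOn.mono
      (Icc_subset_Icc_right hx.2.le)).sub continuousOn_const)) fun z hz => hcl hz
  have hshift {g : ℝ × ℝ → ℝ} (hg : LipschitzOnWith K g (closure (Qset ε₀ f))) {z : ℝ}
      (hz : z ∈ Ioo 0 x) (hbd : |g (z, f z)| ≤ η * z) : |g (z, f z - s)| ≤ η * x + K * s := by
    have hz' := Ioo_subset_Icc_self hz
    have h := hg.dist_le_mul _ (hcl hz') _ (hQ.mk_mem_closure ⟨hz.1.le, hz.2.trans hx.2⟩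
      ⟨(hfs hz').1.trans (hfs hz').2, le_rfl⟩)
    rw [Prod.dist_eq, dist_self, Real.dist_eq, Real.dist_eq, sub_sub_cancel_left, abs_neg,
      abs_of_pos hs.1, max_eq_right hs.1.le] at h
    linarith [abs_sub_abs_le_abs_sub (g (z, f z - s)) (g (z, f z)),
      mul_le_mul_of_nonneg_left hz.2.le hη]
  have h := abs_sub_le_mul_sub_of_abs_hasDerivAt_le hx.1.le hcont (fun z hz =>
    hasDerivAt_comp_prodMk
      (hψ.differentiableAt hQ ⟨hz.1, hz.2.trans hx.2, hfs (Ioo_subset_Icc_self hz)⟩)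
      (hasDerivAt_id' z)
      ((hQ.differentiableAt z ⟨hz.1, hz.2.trans hx.2⟩).hasDerivAt.sub_const s))
    (B := (1 + F) * (η * x + K * s)) fun z hz => by
      have hd₁ := hshift hψ.lipschitzOnWith_pd1 hz (h₁ z hz)
      have hd₂ := hshift hψ.lipschitzOnWith_pd2 hz (h₂ z hz)
      have hprod := mul_le_mul hd₂ (hQ.abs_deriv_le ⟨hz.1, hz.2.trans hx.2⟩) (abs_nonneg _)
        ((abs_nonneg _).trans hd₂)
      rw [mul_one]
      refine (abs_add_le _ _).trans ?_
      rw [abs_mul]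
      linarith
  rwa [hψ.eq_zero _ (hcl ⟨le_rfl, hx.1.le⟩) rfl, sub_zero, sub_zero] at h

theorem eventually_abs_le_mul_sq (hψ : IsSonicSolution ε₀ a b L K f O₁ O₂ O₃ O₄ O₅ ψ)
    (hQ : IsSonicDomain ε₀ F f) (hb : b ≠ 0) {η : ℝ} (hη : 0 < η) :
    ∀ᶠ x in 𝓝[>] 0, |ψ (x, f x)| ≤ η * x ^ 2 := by
  have hF : (0 : ℝ) < 1 + F := by positivity
  have hη' : 0 < η / (1 + F) := div_pos hη hF
  filter_upwards [hQ.eventually_mem_Ioo,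
    eventually_forall_Ioc_of_eventually (hψ.eventually_abs_pd1_le hQ hb hη'),
    eventually_forall_Ioc_of_eventually (hψ.eventually_abs_pd2_le hQ hb hη')] with x hx h₁ h₂
  have hlim : Tendsto (fun s => |ψ (x, f x - s)|) (𝓝[>] 0) (𝓝 |ψ (x, f x)|) := by
    have hfx : 0 < f x := hQ.f_zero_pos.trans (hQ.f_zero_lt x hx)
    refine ((hψ.continuousOn _ (hQ.mk_mem_closure (Ioo_subset_Ico_self hx)
      ⟨hfx, le_rfl⟩)).tendsto.comp (tendsto_nhdsWithin_iff.2 ⟨?_, ?_⟩)).abs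
    · exact (Continuous.tendsto' (by fun_prop) 0 (x, f x) (by simp)).mono_left nhdsWithin_le_nhds
    · filter_upwards [Ioo_mem_nhdsGT hfx] with s hs using hQ.mk_mem_closure
        (Ioo_subset_Ico_self hx) ⟨sub_pos.2 hs.2, sub_le_self _ hs.1.le⟩
  have hlim' : Tendsto (fun s => (1 + F) * (η / (1 + F) * x + K * s) * x) (𝓝[>] 0)
      (𝓝 (η * x ^ 2)) :=
    (Continuous.tendsto' (by fun_prop) 0 _ (by rw [mul_zero, add_zero]; field_simp)).mono_left
      nhdsWithin_le_nhds
  refine le_of_tendsto_of_tendsto hlim hlim' ?_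
  filter_upwards [Ioo_mem_nhdsGT hQ.f_zero_pos] with s hs
  refine hψ.abs_apply_sub_le hQ hx hs hη'.le (fun z hz => h₁ z (Ioo_subset_Ioc_self hz))
    fun z hz => h₂ z (Ioo_subset_Ioc_self hz) (f z)
      ⟨hQ.f_zero_le ⟨hz.1.le, hz.2.trans hx.2⟩, le_rfl⟩

theorem isLittleO_sq (hψ : IsSonicSolution ε₀ a b L K f O₁ O₂ O₃ O₄ O₅ ψ)
    (hQ : IsSonicDomain ε₀ F f) (hb : b ≠ 0) :
    (fun x => ψ (x, f 0)) =o[𝓝[>] 0] fun x => x ^ 2 := by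
  refine .of_bound fun η hη => ?_
  have hF : (0 : ℝ) < 1 + F := by positivity
  have hη' : 0 < η / (1 + F) := div_pos hη hF
  filter_upwards [hQ.eventually_mem_Ioo, hψ.eventually_abs_le_mul_sq hQ hb hη',
    hψ.eventually_abs_pd2_le hQ hb hη'] with x hx htop hy
  have hfx := hQ.f_zero_lt x hx
  have hvar := hψ.abs_sub_vertical_le hQ hx hQ.f_zero_pos hfx.le le_rfl fun t ht =>
    hy t (Ioo_subset_Icc_self ht)
  rw [Real.norm_eq_abs, Real.norm_of_nonneg (sq_nonneg x)]
  calc |ψ (x, f 0)| ≤ |ψ (x, f x)| + |ψ (x, f x) - ψ (x, f 0)| := by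
        linarith [abs_sub_abs_le_abs_sub (ψ (x, f 0)) (ψ (x, f x)),
          abs_sub_comm (ψ (x, f 0)) (ψ (x, f x))]
    _ ≤ η / (1 + F) * x ^ 2 + η / (1 + F) * x * (F * x) :=
        add_le_add htop (hvar.trans (mul_le_mul_of_nonneg_left
          (hQ.sub_le_mul (Ioo_subset_Icc_self hx)) (mul_nonneg hη'.le hx.1.le)))
    _ = η * x ^ 2 := by field_simp

end IsSonicSolution

end Estimates

section ClusterPoints

variable {X : Type*} [TopologicalSpace X] {g : X → ℝ}

theorem frequently_eq_of_frequently_lt_of_frequently_gt {ι : Sort*} {P : ι → Prop} {s : ι → Set X}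
    {l : Filter X} {t : Set X} {c : ℝ} (hl : l.HasBasis P s)
    (hconn : ∀ i, P i → IsPreconnected (s i)) (ht : t ∈ l) (hg : ContinuousOn g t)
    (hlt : ∃ᶠ x in l, g x < c) (hgt : ∃ᶠ x in l, c < g x) : ∃ᶠ x in l, g x = c := by
  intro hne
  obtain ⟨i, hi, hsub⟩ := hl.mem_iff.1 (inter_mem ht hne)
  obtain ⟨x, hx, hxs⟩ := (hlt.and_eventually (hl.mem_of_mem hi)).exists
  obtain ⟨y, hy, hys⟩ := (hgt.and_eventually (hl.mem_of_mem hi)).exists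
  obtain ⟨z, hzs, hz⟩ := (hconn i hi).intermediate_value hxs hys
    (hg.mono (hsub.trans inter_subset_left)) ⟨hx.le, hy.le⟩
  exact (hsub hzs).2 hz

theorem exists_seq_forall_mem_of_mapClusterPt [FirstCountableTopology X] {s : Set X} {x : X}
    {c : ℝ} (h : MapClusterPt c (𝓝[s] x) g) : ∃ z : ℕ → X, (∀ m, z m ∈ s) ∧
      Tendsto z atTop (𝓝[s] x) ∧ Tendsto (g ∘ z) atTop (𝓝 c) := by
  obtain ⟨z, hgz, hz⟩ := h.exists_seq_tendsto
  obtain ⟨n, hn⟩ := eventually_atTop.1 (hz.eventually eventually_mem_nhdsWithin)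
  exact ⟨fun m => z (m + n), fun m => hn _ (Nat.le_add_left n m),
    hz.comp (tendsto_add_atTop_nat n), hgz.comp (tendsto_add_atTop_nat n)⟩

theorem exists_seqs_and_not_tendsto_of_mapClusterPt [FirstCountableTopology X] {s : Set X} {x : X}
    {c d : ℝ} (hcd : c ≠ d) (hc : MapClusterPt c (𝓝[s] x) g) (hd : MapClusterPt d (𝓝[s] x) g) :
    (∃ z₁ z₂ : ℕ → X, (∀ m, z₁ m ∈ s) ∧ (∀ m, z₂ m ∈ s) ∧ Tendsto z₁ atTop (𝓝 x) ∧
      Tendsto z₂ atTop (𝓝 x) ∧ Tendsto (fun m => g (z₁ m)) atTop (𝓝 c) ∧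
      Tendsto (fun m => g (z₂ m)) atTop (𝓝 d)) ∧ ¬∃ l, Tendsto g (𝓝[s] x) (𝓝 l) := by
  obtain ⟨z₁, hmem₁, hz₁, hg₁⟩ := exists_seq_forall_mem_of_mapClusterPt hc
  obtain ⟨z₂, hmem₂, hz₂, hg₂⟩ := exists_seq_forall_mem_of_mapClusterPt hd
  refine ⟨⟨z₁, z₂, hmem₁, hmem₂, hz₁.mono_right nhdsWithin_le_nhds,
    hz₂.mono_right nhdsWithin_le_nhds, hg₁, hg₂⟩, fun ⟨l, hl⟩ => hcd ?_⟩
  exact (tendsto_nhds_unique hg₁ (hl.comp hz₁)).trans (tendsto_nhds_unique (hl.comp hz₂) hg₂)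

end ClusterPoints

section SecondDerivative

variable {ε₀ a b L k : ℝ} {K F : ℝ≥0} {f : ℝ → ℝ} {O₁ O₂ O₃ O₄ O₅ ψ : ℝ × ℝ → ℝ}

namespace IsSonicSolution

theorem eventually_exists_pd1_eq_mul (hψ : IsSonicSolution ε₀ a b L K f O₁ O₂ O₃ O₄ O₅ ψ)
    (hQ : IsSonicDomain ε₀ F f) {P : ℝ × ℝ → Prop} (hP : ∀ᶠ p in 𝓝[>] 0 ×ˢ 𝓝[≤] (f 0), P p) :
    ∀ᶠ p in 𝓝[>] 0 ×ˢ 𝓝[≤] (f 0), ∃ q, P q ∧ pd1 ψ p = pd1 (pd1 ψ) q * p.1 := by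
  obtain ⟨r, hr, hbox⟩ := (hasBasis_nhdsGT_prod_nhdsLE 0 (f 0)).eventually_iff.1 hP
  rw [zero_add] at hbox
  filter_upwards [prod_mem_prod (inter_mem (Ioo_mem_nhdsGT hr) hQ.eventually_mem_Ioo)
    (inter_mem (Ioc_mem_nhdsLE (sub_lt_self (f 0) hr)) (inter_mem (Ioc_mem_nhdsLE hQ.f_zero_pos)
      (hψ.eventually_pd1_zero_left hQ)))] with p ⟨⟨hx, hxε⟩, hy, hy₀, hzero⟩
  have hmem {t : ℝ} (ht : t ∈ Ioo 0 p.1) : (t, p.2) ∈ Qset ε₀ f :=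
    hQ.mk_mem_Qset ⟨ht.1, ht.2.trans hxε.2⟩ hy₀
  have hcont : ContinuousOn (fun t => pd1 ψ (t, p.2)) (Icc 0 p.1) :=
    hψ.lipschitzOnWith_pd1.continuousOn.comp (by fun_prop) fun t ht =>
      hQ.mk_mem_closure ⟨ht.1, ht.2.trans_lt hxε.2⟩
        ⟨hy₀.1, hy₀.2.trans (hQ.f_zero_le ⟨ht.1, ht.2.trans_lt hxε.2⟩)⟩
  obtain ⟨t, ht, hslope⟩ := exists_hasDerivAt_eq_slope _ _ hx.1 hcont
    fun t ht => hasDerivAt_pd1 (differentiableAt_pd1 (hψ.contDiffAt hQ (hmem ht)))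
  refine ⟨(t, p.2), hbox ⟨⟨ht.1, ht.2.trans hx.2⟩, hy⟩, ?_⟩
  rw [show pd1 ψ (0, p.2) = 0 from hzero, sub_zero, sub_zero, eq_div_iff hx.1.ne'] at hslope
  exact hslope.symm

theorem frequently_pd1_pd1_lt (hψ : IsSonicSolution ε₀ a b L K f O₁ O₂ O₃ O₄ O₅ ψ)
    (hQ : IsSonicDomain ε₀ F f) (hb : b ≠ 0) (hk : 0 < k) :
    ∃ᶠ p in 𝓝[>] 0 ×ˢ 𝓝[≤] (f 0), pd1 (pd1 ψ) p < k := by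
  intro hge
  simp only [not_lt] at hge
  have hgrow : ∀ᶠ x in 𝓝[>] 0, k * x ≤ pd1 ψ (x, f 0) := by
    have h := ((hψ.eventually_exists_pd1_eq_mul hQ hge).curry.mono
      fun x hx => hx.self_of_nhdsWithin self_mem_Iic)
    filter_upwards [h, self_mem_nhdsWithin] with x ⟨q, hq, hx⟩ (hx₀ : 0 < x)
    rw [hx]
    gcongr
  obtain ⟨x, ⟨hx, hgrow⟩, hsmall⟩ := ((hQ.eventually_mem_Ioo.and
    (eventually_forall_Ioc_of_eventually hgrow)).and
      ((hψ.isLittleO_sq hQ hb).bound (by positivity : 0 < k / 8))).exists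
  have hmem {t : ℝ} (ht : t ∈ Icc (x / 2) x) : (t, f 0) ∈ Qset ε₀ f :=
    hQ.mk_mem_Qset ⟨(half_pos hx.1).trans_le ht.1, ht.2.trans_lt hx.2⟩ ⟨hQ.f_zero_pos, le_rfl⟩
  have hderiv {t : ℝ} (ht : t ∈ Icc (x / 2) x) :=
    hasDerivAt_pd1 (hψ.differentiableAt hQ (hmem ht))
  have hmvt := mul_sub_le_sub_of_le_hasDerivAt (half_le_self hx.1.le)
    (fun t ht => (hderiv ht).continuousAt.continuousWithinAt)
    (fun t ht => hderiv (Ioo_subset_Icc_self ht)) (k := k * (x / 2)) fun t ht =>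
      (mul_le_mul_of_nonneg_left ht.1.le hk.le).trans
        (hgrow t ⟨(half_pos hx.1).trans ht.1, ht.2.le⟩)
  have hhalf := hψ.pos _ (hmem ⟨le_rfl, half_le_self hx.1.le⟩)
  have hupper : ψ (x, f 0) ≤ k / 8 * x ^ 2 := by simpa using (le_abs_self _).trans hsmall
  nlinarith [mul_pos hk (pow_pos hx.1 2)]

theorem exists_isDegenerateElliptic (hψ : IsSonicSolution ε₀ a b L K f O₁ O₂ O₃ O₄ O₅ ψ)
    (hQ : IsSonicDomain ε₀ F f) (ha : 0 < a) (hb : 0 < b) (hk : a * k < 1)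
    (hle : ∀ᶠ p in 𝓝[>] 0 ×ˢ 𝓝[≤] (f 0), pd1 ψ p ≤ k * p.1) :
    ∃ τ δ m N : ℝ, 0 ≤ δ ∧ δ < τ ∧ 0 < m ∧ ∃ r > 0,
      IsDegenerateElliptic τ δ m N (Ioo 0 r ×ˢ Ioc (f 0 - r) (f 0))
        (fun z => 2 * z.1 - a * pd1 ψ z + O₁ z) O₂ (fun z => b + O₃ z) (fun z => -(1 + O₄ z))
        O₅ := by
  set e := (1 - a * k) / 3
  have he : 0 < e := by simp only [e]; linarith
  obtain ⟨N₂, hB⟩ := hψ.isBigO_O₂.bound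
  obtain ⟨N₅, hE⟩ := (hψ.isBigO_O₅.trans ((continuous_fst.tendsto (0, f 0)).mono_left
    nhdsWithin_le_nhds |>.isBigO_one ℝ)).bound
  have hA := hψ.isLittleO_O₁.bound he
  have hC := hψ.tendsto_O₃.eventually (Ioo_mem_nhds (neg_lt_zero.2 (half_pos hb)) (half_pos hb))
  have hD := hψ.tendsto_O₄.eventually_lt_const he
  obtain ⟨r, hr, hbox⟩ := (hasBasis_nhdsGT_prod_nhdsLE 0 (f 0)).eventually_iff.1
    (hle.and (hQ.nhdsGT_prod_nhdsLE_le (hA.and (hB.and (hC.and (hD.and hE))))))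
  rw [zero_add] at hbox
  set N := max N₂ (max (2 * b) N₅)
  refine ⟨1 + 2 * e, 1 + e, b / 2, N, by positivity, by linarith, half_pos hb, r, hr, ?_⟩
  refine ⟨fun p hp => ?_, fun p hp => ?_, fun p hp => ?_, fun p hp => ?_, fun p hp => ?_,
    fun p hp => ?_⟩ <;> obtain ⟨hk, hA, hB, hC, hD, hE⟩ := hbox hp
  · rw [Real.norm_of_nonneg hp.1.1.le] at hA
    have hsplit : (1 + 2 * e) * p.1 = 2 * p.1 - a * (k * p.1) - e * p.1 := by simp only [e]; ring
    linarith [mul_le_mul_of_nonneg_left hk ha.le, (abs_le.1 hA).1]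
  · rw [Real.norm_of_nonneg hp.1.1.le] at hB
    exact hB.trans (mul_le_mul_of_nonneg_right (le_max_left _ _) hp.1.1.le)
  · linarith [hC.1]
  · linarith [hC.2, (le_max_left (2 * b) N₅).trans (le_max_right N₂ _)]
  · exact neg_le_neg (by linarith)
  · rw [norm_one, mul_one] at hE
    exact hE.trans ((le_max_right (2 * b) N₅).trans (le_max_right N₂ _))

theorem eventually_exists_mul_rpow_le (hψ : IsSonicSolution ε₀ a b L K f O₁ O₂ O₃ O₄ O₅ ψ)
    (hQ : IsSonicDomain ε₀ F f) {τ δ m N r : ℝ} (hδ : 0 ≤ δ) (hδτ : δ < τ) (hm : 0 < m)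
    (hr : 0 < r) (hcoef : IsDegenerateElliptic τ δ m N (Ioo 0 r ×ˢ Ioc (f 0 - r) (f 0))
      (fun z => 2 * z.1 - a * pd1 ψ z + O₁ z) O₂ (fun z => b + O₃ z) (fun z => -(1 + O₄ z)) O₅) :
    ∀ᶠ y in 𝓝[<] (f 0), ∃ q ∈ Ioo (0 : ℝ) 1, ∃ μ > 0, ∀ᶠ x in 𝓝[>] 0,
      μ * x ^ (q + 1) ≤ ψ (x, y) := by
  obtain ⟨s, hs, hlt⟩ := exists_between (lt_min hr (lt_min hQ.pos hQ.f_zero_pos))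
  obtain ⟨hsr, hsε, hsf⟩ : s < r ∧ s < ε₀ ∧ s < f 0 := by simpa only [lt_min_iff] using hlt
  have hIoc {y : ℝ} (hy : y ∈ Ioo (f 0 - s) (f 0)) : y ∈ Ioc 0 (f 0) :=
    ⟨(sub_pos.2 hsf).trans hy.1, hy.2.le⟩
  have hmem : Ioo 0 s ×ˢ Ioo (f 0 - s) (f 0) ⊆ Qset ε₀ f := fun p hp =>
    hQ.mk_mem_Qset (Ioo_subset_Ioo_right hsε.le hp.1) (hIoc hp.2)
  have hcl : Ico 0 s ×ˢ Ioo (f 0 - s) (f 0) ⊆ closure (Qset ε₀ f) := fun p hp =>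
    have hx : p.1 ∈ Ico 0 ε₀ := Ico_subset_Ico_right hsε.le hp.1
    hQ.mk_mem_closure hx ⟨(hIoc hp.2).1, (hIoc hp.2).2.trans (hQ.f_zero_le hx)⟩
  have hsub : Ioo 0 s ×ˢ Ioo (f 0 - s) (f 0) ⊆ Ioo 0 r ×ˢ Ioc (f 0 - r) (f 0) :=
    prod_mono (Ioo_subset_Ioo_right hsr.le)
      (Ioo_subset_Ioc_self.trans (Ioc_subset_Ioc_left (by linarith)))
  filter_upwards [Ioo_mem_nhdsLT (sub_lt_self (f 0) hs)] with y hy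
  exact exists_mul_rpow_le_of_ellOp_nonpos hs hy (hcoef.mono hsub) hδ hδτ hm
    (hψ.contDiffOn.mono hmem) (hψ.continuousOn.mono hcl) (fun p hp => hψ.pos p (hmem hp))
    (fun y hy => (hψ.eq_zero _ (hcl ⟨⟨le_rfl, hs⟩, hy⟩) rfl).ge)
    (fun p hp => (hψ.ellOp_eq_zero p (hmem hp)).le)

-- If `ψₓₓ ≤ k`, the linearized equation degenerates slowly enough for the barrier to force growth
-- like `x ^ (q + 1)` with `q < 1`, whereas `ψₓ = O(x)` gives `ψ = O(x²)`.
theorem frequently_lt_pd1_pd1 (hψ : IsSonicSolution ε₀ a b L K f O₁ O₂ O₃ O₄ O₅ ψ)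
    (hQ : IsSonicDomain ε₀ F f) (ha : 0 < a) (hb : 0 < b) (hk : a * k < 1) :
    ∃ᶠ p in 𝓝[>] 0 ×ˢ 𝓝[≤] (f 0), k < pd1 (pd1 ψ) p := by
  intro hle
  have hpd1 : ∀ᶠ p in 𝓝[>] 0 ×ˢ 𝓝[≤] (f 0), pd1 ψ p ≤ k * p.1 := by
    filter_upwards [hψ.eventually_exists_pd1_eq_mul hQ hle,
      prod_mem_prod self_mem_nhdsWithin univ_mem] with p ⟨q, hq, hp⟩ hx
    rw [hp]
    exact mul_le_mul_of_nonneg_right (not_lt.1 hq) (mem_Ioi.1 hx.1).le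
  obtain ⟨τ, δ, m, N, hδ, hδτ, hm, r, hr, hcoef⟩ :=
    hψ.exists_isDegenerateElliptic hQ ha hb hk hpd1
  obtain ⟨M, hM⟩ := (hψ.isBigO_sq hQ).bound
  have hsq : ∀ᶠ y in 𝓝[<] (f 0), ∀ᶠ x in 𝓝[>] 0, ‖ψ (x, y)‖ ≤ M * ‖x ^ 2‖ :=
    (eventually_swap_iff.1 hM).curry.filter_mono (nhdsWithin_mono _ Iio_subset_Iic_self)
  obtain ⟨y, ⟨q, hq, μ, hμ, hgrow⟩, hsq⟩ :=
    ((hψ.eventually_exists_mul_rpow_le hQ hδ hδτ hm hr hcoef).and hsq).exists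
  refine not_eventually_mul_rpow_le_mul_rpow (p := q + 1) (q := 2) (C := M) hμ
    (by linarith [hq.2]) ?_
  filter_upwards [hgrow, hsq] with x hx hupper
  rw [Real.rpow_two]
  exact hx.trans ((le_abs_self _).trans (by simpa using hupper))

theorem continuousOn_pd1_pd1 (hψ : IsSonicSolution ε₀ a b L K f O₁ O₂ O₃ O₄ O₅ ψ)
    (hQ : IsSonicDomain ε₀ F f) : ContinuousOn (pd1 (pd1 ψ)) (Qset ε₀ f) := fun _ hp =>
  (contDiffAt_pd1 (m := 0) (contDiffAt_pd1 (m := 1) (hψ.contDiffAt hQ hp)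
    one_add_one_eq_two.le) (zero_add 1).le).continuousAt.continuousWithinAt

theorem frequently_pd1_pd1_eq (hψ : IsSonicSolution ε₀ a b L K f O₁ O₂ O₃ O₄ O₅ ψ)
    (hQ : IsSonicDomain ε₀ F f) (ha : 0 < a) (hb : 0 < b) (hk : k ∈ Ioo 0 (1 / a)) :
    ∃ᶠ p in 𝓝[Qset ε₀ f] (0, f 0), pd1 (pd1 ψ) p = k :=
  have hfreq := frequently_eq_of_frequently_lt_of_frequently_gt
    (hasBasis_nhdsGT_prod_nhdsLE 0 (f 0))
    (fun _ _ => isPreconnected_Ioo.prod isPreconnected_Ioc)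
    (hQ.nhdsGT_prod_nhdsLE_le self_mem_nhdsWithin) (hψ.continuousOn_pd1_pd1 hQ)
    (hψ.frequently_pd1_pd1_lt hQ hb.ne' hk.1)
    (hψ.frequently_lt_pd1_pd1 hQ ha hb ((lt_div_iff₀' ha).1 hk.2))
  hfreq.filter_mono hQ.nhdsGT_prod_nhdsLE_le

end IsSonicSolution

theorem stmt2_general (hQ : IsSonicDomain ε₀ F f) (ha : 0 < a) (hb : 0 < b)
    (hψ : IsSonicSolution ε₀ a b L K f O₁ O₂ O₃ O₄ O₅ ψ) {c : ℝ} (hc : c ∈ Icc 0 (1 / a)) :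
    MapClusterPt c (𝓝[Qset ε₀ f] (0, f 0)) (pd1 (pd1 ψ)) := by
  rw [← closure_Ioo (one_div_pos.2 ha).ne] at hc
  refine closure_minimal (fun k hk => ?_) isClosed_setOfPred_clusterPt hc
  refine mapClusterPt_iff_frequently.2 fun s hs => ?_
  exact (hψ.frequently_pd1_pd1_eq hQ ha hb hk).mono fun p hp => hp ▸ mem_of_mem_nhds hs

end SecondDerivative

section Hypotheses

variable {ε₀ a b lam N μ ν : ℝ} {K F : ℝ≥0} {f f' : ℝ → ℝ} {β₁ β₂ u ψ : ℝ × ℝ → ℝ}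
  {O₁ O₂ O₃ O₄ O₅ : ℝ × ℝ → ℝ} {x : ℝ × ℝ}

theorem IsSonicDomain.of_hasDerivAt (hε₀ : 0 < ε₀) (hf₀ : 0 < f 0)
    (hf : ∀ x ∈ Icc 0 ε₀, HasDerivAt f (f' x) x) (hf' : ∀ x ∈ Icc 0 ε₀, 0 < f' x)
    (hF : LipschitzOnWith F f (Icc 0 ε₀)) : IsSonicDomain ε₀ F f where
  pos := hε₀
  f_zero_pos := hf₀
  f_zero_lt x hx := by
    refine strictMonoOn_of_deriv_pos (convex_Icc 0 ε₀) hF.continuousOn (fun t ht => ?_)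
      ⟨le_rfl, hε₀.le⟩ (Ioo_subset_Icc_self hx) hx.1
    have ht' := interior_subset ht
    exact (hf t ht').deriv ▸ hf' t ht'
  lipschitzOnWith := hF
  differentiableAt x hx := (hf x (Ioo_subset_Icc_self hx)).differentiableAt

theorem isBigO_fst_of_abs_le (hu : ∀ p ∈ Qset ε₀ f, |u p| ≤ N * p.1) :
    u =O[𝓝[Qset ε₀ f] x] Prod.fst := by
  refine .of_bound N (eventually_mem_nhdsWithin.mono fun p hp => ?_)
  rw [Real.norm_of_nonneg hp.1.le]
  exact hu p hp

theorem tendsto_zero_of_abs_le_mul_fst {y : ℝ} (hu : ∀ p ∈ Qset ε₀ f, |u p| ≤ N * p.1) :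
    Tendsto u (𝓝[Qset ε₀ f] (0, y)) (𝓝 0) :=
  (isBigO_fst_of_abs_le hu).trans_tendsto
    ((Continuous.tendsto' continuous_fst (0, y) 0 rfl).mono_left nhdsWithin_le_nhds)

theorem isLittleO_fst_of_abs_le_mul_sq {y : ℝ} (hu : ∀ p ∈ Qset ε₀ f, |u p| ≤ N * p.1 ^ 2) :
    u =o[𝓝[Qset ε₀ f] (0, y)] Prod.fst := by
  have hbig : u =O[𝓝[Qset ε₀ f] (0, y)] fun p => p.1 ^ 2 :=
    .of_bound N (eventually_mem_nhdsWithin.mono fun p hp => by simpa using hu p hp)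
  exact hbig.trans_isLittleO ((isLittleO_pow_id one_lt_two).comp_tendsto
    ((Continuous.tendsto' continuous_fst (0, y) 0 rfl).mono_left nhdsWithin_le_nhds))

theorem abs_le_mul_fst_of_div_mem_Icc (hu : ∀ p ∈ Qset ε₀ f, u p / p.1 ∈ Icc (-μ) ν) :
    ∀ p ∈ Qset ε₀ f, |u p| ≤ max μ ν * p.1 := by
  intro p hp
  obtain ⟨hlow, hupp⟩ := hu p hp
  have hquot : |u p / p.1| ≤ max μ ν :=
    abs_le.2 ⟨(neg_le_neg (le_max_left μ ν)).trans hlow, hupp.trans (le_max_right μ ν)⟩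
  rwa [abs_div, abs_of_pos hp.1, div_le_iff₀ hp.1] at hquot

theorem abs_le_mul_of_oblique {β γ u v w : ℝ} (hlam : 0 < lam) (hβ : lam ≤ β)
    (hγ : |γ| ≤ 1 / lam) (h : β * u + γ * v + w = 0) :
    |u| ≤ max (1 / lam) 1 / lam * (|v| + |w|) := by
  rw [div_mul_eq_mul_div, le_div_iff₀' hlam]
  calc lam * |u| ≤ β * |u| := by gcongr
    _ = |γ * v + w| := by
        rw [show γ * v + w = -(β * u) by linarith, abs_neg, abs_mul, abs_of_pos (hlam.trans_le hβ)]
    _ ≤ |γ| * |v| + |w| := (abs_add_le _ _).trans_eq (by rw [abs_mul])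
    _ ≤ max (1 / lam) 1 * |v| + max (1 / lam) 1 * |w| := by
        gcongr
        · exact hγ.trans (le_max_left _ _)
        · exact le_mul_of_one_le_left (abs_nonneg w) (le_max_right _ _)
    _ = max (1 / lam) 1 * (|v| + |w|) := by ring

theorem IsSonicSolution.of_bounds (hQ : IsSonicDomain ε₀ F f) (hlam : 0 < lam)
    (hO₁ : ∀ p ∈ Dset ε₀ f, |O₁ p| ≤ N * p.1 ^ 2) (hO₂ : ∀ p ∈ Dset ε₀ f, |O₂ p| ≤ N * p.1)
    (hO₃ : ∀ p ∈ Dset ε₀ f, |O₃ p| ≤ N * p.1) (hO₄ : ∀ p ∈ Dset ε₀ f, |O₄ p| ≤ N * p.1)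
    (hO₅ : ∀ p ∈ Dset ε₀ f, |O₅ p| ≤ N * p.1)
    (hβ₁ : ∀ p ∈ Gamf ε₀ f, lam ≤ β₁ p) (hβ₂ : ∀ p ∈ Gamf ε₀ f, |β₂ p| ≤ 1 / lam)
    (hC2 : ContDiffOn ℝ 2 ψ (Qset ε₀ f)) (hcont : ContinuousOn ψ (closure (Qset ε₀ f)))
    (hpd1 : LipschitzOnWith K (pd1 ψ) (closure (Qset ε₀ f)))
    (hpd2 : LipschitzOnWith K (pd2 ψ) (closure (Qset ε₀ f)))
    (hpos : ∀ p ∈ Qset ε₀ f, 0 < ψ p) (hdiv : ∀ p ∈ Qset ε₀ f, pd1 ψ p / p.1 ∈ Icc (-μ) ν)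
    (heq : ∀ p ∈ Qset ε₀ f,
      (2 * p.1 - a * pd1 ψ p + O₁ p) * pd1 (pd1 ψ) p + O₂ p * pd2 (pd1 ψ) p +
        (b + O₃ p) * pd2 (pd2 ψ) p - (1 + O₄ p) * pd1 ψ p + O₅ p * pd2 ψ p = 0)
    (hzero : ∀ p ∈ closure (Qset ε₀ f), p.1 = 0 → ψ p = 0)
    (hobl : ∀ p ∈ closure (Qset ε₀ f), p.2 = f p.1 →
      β₁ p * pd1 ψ p + β₂ p * pd2 ψ p + ψ p = 0) :
    IsSonicSolution ε₀ a b (max (1 / lam) 1 / lam) K f O₁ O₂ O₃ O₄ O₅ ψ :=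
  have hD : Qset ε₀ f ⊆ Dset ε₀ f := fun _ hp => ⟨subset_closure hp, hp.1⟩
  { contDiffOn := hC2
    continuousOn := hcont
    lipschitzOnWith_pd1 := hpd1
    lipschitzOnWith_pd2 := hpd2
    pos := hpos
    eq_zero := hzero
    isBigO_pd1 := isBigO_fst_of_abs_le (abs_le_mul_fst_of_div_mem_Icc hdiv)
    isLittleO_O₁ := isLittleO_fst_of_abs_le_mul_sq fun p hp => hO₁ p (hD hp)
    isBigO_O₂ := isBigO_fst_of_abs_le fun p hp => hO₂ p (hD hp)
    tendsto_O₃ := tendsto_zero_of_abs_le_mul_fst fun p hp => hO₃ p (hD hp)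
    tendsto_O₄ := tendsto_zero_of_abs_le_mul_fst fun p hp => hO₄ p (hD hp)
    isBigO_O₅ := isBigO_fst_of_abs_le fun p hp => hO₅ p (hD hp)
    ellOp_eq_zero := fun p hp => by
      rw [ellOp]
      linear_combination heq p hp
    oblique := fun x hx => by
      have hΓ : (x, f x) ∈ Gamf ε₀ f := ⟨x, Ioo_subset_Icc_self hx, rfl⟩
      have hcl : (x, f x) ∈ closure (Qset ε₀ f) := hQ.mk_mem_closure (Ioo_subset_Ico_self hx)
        ⟨hQ.f_zero_pos.trans (hQ.f_zero_lt x hx), le_rfl⟩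
      exact abs_le_mul_of_oblique hlam (hβ₁ _ hΓ) (hβ₂ _ hΓ) (hobl _ hcl rfl) }

end Hypotheses

theorem stmt2
    (ε₀ a b ω lam N : ℝ)
    (hε₀ : 0 < ε₀) (ha : 0 < a) (hb : 0 < b) (hω : 0 < ω) (hlam : 0 < lam) (hN : 0 < N)
    (f f' : ℝ → ℝ)
    (hf0 : 0 < f 0)
    (hfd : ∀ x ∈ Icc (0:ℝ) ε₀, HasDerivAt f (f' x) x)
    (hflip : ∃ K : NNReal, LipschitzOnWith K f (Icc (0:ℝ) ε₀) ∧
      LipschitzOnWith K f' (Icc (0:ℝ) ε₀))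
    (hf'ω : ∀ x ∈ Icc (0:ℝ) ε₀, ω ≤ f' x)
    (O₁ O₂ O₃ O₄ O₅ : ℝ × ℝ → ℝ)
    (hO1s : ContDiffOn ℝ 1 O₁ (Dset ε₀ f))
    (hO2s : ContDiffOn ℝ 1 O₂ (Dset ε₀ f))
    (hO3s : ContDiffOn ℝ 1 O₃ (Dset ε₀ f))
    (hO4s : ContDiffOn ℝ 1 O₄ (Dset ε₀ f))
    (hO5s : ContDiffOn ℝ 1 O₅ (Dset ε₀ f))
    (hO1b : ∀ p ∈ Dset ε₀ f, |O₁ p| ≤ N * p.1 ^ 2 ∧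
      ‖fderivWithin ℝ O₁ (Dset ε₀ f) p‖ ≤ N * p.1)
    (hO2b : ∀ p ∈ Dset ε₀ f, |O₂ p| ≤ N * p.1 ∧
      ‖fderivWithin ℝ O₂ (Dset ε₀ f) p‖ ≤ N)
    (hO3b : ∀ p ∈ Dset ε₀ f, |O₃ p| ≤ N * p.1 ∧
      ‖fderivWithin ℝ O₃ (Dset ε₀ f) p‖ ≤ N)
    (hO4b : ∀ p ∈ Dset ε₀ f, |O₄ p| ≤ N * p.1 ∧
      ‖fderivWithin ℝ O₄ (Dset ε₀ f) p‖ ≤ N)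
    (hO5b : ∀ p ∈ Dset ε₀ f, |O₅ p| ≤ N * p.1 ∧
      ‖fderivWithin ℝ O₅ (Dset ε₀ f) p‖ ≤ N)
    (β₁ β₂ : ℝ × ℝ → ℝ)
    (hβ₁c : ContinuousOn β₁ (Gamf ε₀ f)) (hβ₂c : ContinuousOn β₂ (Gamf ε₀ f))
    (hβ₁ : ∀ p ∈ Gamf ε₀ f, lam ≤ β₁ p)
    (hβ₂ : ∀ p ∈ Gamf ε₀ f, |β₂ p| ≤ 1 / lam)
    (ψ : ℝ × ℝ → ℝ)
    -- (i) ψ ∈ C²(Q) ∩ C^{1,1}(closure Q)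
    (hψC2 : ContDiffOn ℝ 2 ψ (Qset ε₀ f))
    (hψC11 : ∃ K : NNReal, LipschitzOnWith K ψ (closure (Qset ε₀ f)) ∧
      LipschitzOnWith K (pd1 ψ) (closure (Qset ε₀ f)) ∧
      LipschitzOnWith K (pd2 ψ) (closure (Qset ε₀ f)))
    -- (ii) ψ > 0 in Q
    (hψpos : ∀ p ∈ Qset ε₀ f, 0 < ψ p)
    -- (iii) −μ ≤ ψ_x/x ≤ (2−δ)/a in Q
    (hμδ : ∃ μ > (0:ℝ), ∃ δ ∈ Set.Ioo (0:ℝ) 1, ∀ p ∈ Qset ε₀ f,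
      -μ ≤ pd1 ψ p / p.1 ∧ pd1 ψ p / p.1 ≤ (2 - δ) / a)
    -- (iv) the equation
    (heq : ∀ p ∈ Qset ε₀ f,
      (2 * p.1 - a * pd1 ψ p + O₁ p) * pd1 (pd1 ψ) p + O₂ p * pd2 (pd1 ψ) p +
        (b + O₃ p) * pd2 (pd2 ψ) p - (1 + O₄ p) * pd1 ψ p + O₅ p * pd2 ψ p = 0)
    -- boundary conditions
    (hbc1 : ∀ p ∈ closure (Qset ε₀ f), p.1 = 0 → ψ p = 0)
    (hbc2 : ∀ p ∈ closure (Qset ε₀ f), p.2 = 0 → pd2 ψ p = 0)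
    (hbc3 : ∀ p ∈ closure (Qset ε₀ f), p.2 = f p.1 →
      β₁ p * pd1 ψ p + β₂ p * pd2 ψ p + ψ p = 0) :
    (∃ z₁ z₂ : ℕ → ℝ × ℝ,
      (∀ m, z₁ m ∈ Qset ε₀ f) ∧ (∀ m, z₂ m ∈ Qset ε₀ f) ∧
      Tendsto z₁ atTop (nhds ((0:ℝ), f 0)) ∧
      Tendsto z₂ atTop (nhds ((0:ℝ), f 0)) ∧
      Tendsto (fun m => pd1 (pd1 ψ) (z₁ m)) atTop (nhds (1 / a)) ∧
      Tendsto (fun m => pd1 (pd1 ψ) (z₂ m)) atTop (nhds 0)) ∧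
    ¬ ∃ l : ℝ, Tendsto (pd1 (pd1 ψ)) (nhdsWithin ((0:ℝ), f 0) (Qset ε₀ f)) (nhds l) := by
  obtain ⟨F, hF, -⟩ := hflip
  obtain ⟨K, hψ, hpd1, hpd2⟩ := hψC11
  obtain ⟨μ, -, δ, -, hdiv⟩ := hμδ
  have hQ : IsSonicDomain ε₀ F f :=
    .of_hasDerivAt hε₀ hf0 hfd (fun x hx => hω.trans_le (hf'ω x hx)) hF
  have hsol : IsSonicSolution ε₀ a b (max (1 / lam) 1 / lam) K f O₁ O₂ O₃ O₄ O₅ ψ :=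
    .of_bounds hQ hlam (fun p hp => (hO1b p hp).1) (fun p hp => (hO2b p hp).1)
      (fun p hp => (hO3b p hp).1) (fun p hp => (hO4b p hp).1) (fun p hp => (hO5b p hp).1)
      hβ₁ hβ₂ hψC2 hψ.continuousOn hpd1 hpd2 hψpos hdiv heq hbc1 hbc3
  have ha' : 0 < 1 / a := one_div_pos.2 ha
  exact exists_seqs_and_not_tendsto_of_mapClusterPt ha'.ne'
    (stmt2_general hQ ha hb hsol ⟨ha'.le, le_rfl⟩) (stmt2_general hQ ha hb hsol ⟨le_rfl, ha'.le⟩)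
end

section
/- Let (ū₁, Ē) : [0,T) → ℝ² be continuously differentiable with ū₁(x₁) > 0 for all x₁ ∈ [0,T), (ū₁, Ē)(0) = (u₀, E₀), and suppose that for all x₁ ∈ [0,T): (ū₁(x₁)^{γ+1} − u_s^{γ+1})·ū₁'(x₁) = Ē(x₁)·ū₁(x₁)^γ and Ē'(x₁) = J/ū₁(x₁) − ρ̄^{in}. Then ½ Ē(x₁)² − H(ū₁(x₁)) = ½ E₀² − H(u₀) for all x₁ ∈ [0,T). -/
open Set Filter intervalIntegral

/-- The sonic speed `u_s = (γ S₀ J^{γ−1})^{1/(γ+1)}`. -/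
noncomputable def usonic (γ S₀ J : ℝ) : ℝ :=
  (γ * S₀ * J ^ (γ - 1)) ^ (1 / (γ + 1))

/-- `ū^{in} = J / ρ̄^{in}`. -/
noncomputable def uIn (ρin J : ℝ) : ℝ := J / ρin

/-- `H(u) = (J/ū^{in}) ∫_{u_s}^{u} t^{−(γ+1)} (t^{γ+1} − u_s^{γ+1})(ū^{in} − t) dt`. -/
noncomputable def Hfun (γ ρin S₀ J : ℝ) (u : ℝ) : ℝ :=
  (J / uIn ρin J) *
    ∫ t in usonic γ S₀ J..u,
      t ^ (-(γ + 1)) * ((t ^ (γ + 1) - usonic γ S₀ J ^ (γ + 1)) * (uIn ρin J - t))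

/-- The critical trajectory `T = {(u,E) ∈ (0,∞) × ℝ : ½E² − H(u) = 0}`. -/
def critTraj (γ ρin S₀ J : ℝ) : Set (ℝ × ℝ) :=
  {p | 0 < p.1 ∧ p.2 ^ 2 / 2 - Hfun γ ρin S₀ J p.1 = 0}

/-- The critical trajectory with acceleration. -/
def critTrajAcc (γ ρin S₀ J : ℝ) : Set (ℝ × ℝ) :=
  {p ∈ critTraj γ ρin S₀ J | 0 ≤ (p.1 - usonic γ S₀ J) * p.2}

/-- The critical trajectory with deceleration. -/
def critTrajDec (γ ρin S₀ J : ℝ) : Set (ℝ × ℝ) :=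
  {p ∈ critTraj γ ρin S₀ J | (p.1 - usonic γ S₀ J) * p.2 ≤ 0}

/-!
Along a solution `Ē Ē' = (J/ū₁ - ρ̄^{in}) Ē`. Multiplying the momentum equation by `ū₁^{-(γ+1)}`,
rather than dividing by `ū₁^{γ+1} - u_s^{γ+1}`, gives
`ū₁^{-(γ+1)} (ū₁^{γ+1} - u_s^{γ+1}) ū₁' = Ē/ū₁`. Since `(J/ū^{in}) (ū^{in} - u)/u = J/u - ρ̄^{in}`,
this identifies `(H ∘ ū₁)'` with `Ē Ē'`, also at points where the flow is sonic.
-/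

section Calculus

variable {𝕜 : Type*} [RCLike 𝕜] {s : Set 𝕜}

theorem eq_of_hasDerivWithinAt_zero {F : Type*} [NormedAddCommGroup F] [NormedSpace 𝕜 F]
    {f : 𝕜 → F} (hs : Convex ℝ s) (hf : ∀ x ∈ s, HasDerivWithinAt f 0 s x)
    {x y : 𝕜} (hx : x ∈ s) (hy : y ∈ s) : f x = f y := by
  have hnorm : ‖f x - f y‖ ≤ 0 * ‖x - y‖ :=
    hs.norm_image_sub_le_of_norm_hasDerivWithin_le hf (fun _ _ => norm_zero.le) hy hx
  rwa [zero_mul, norm_le_zero_iff, sub_eq_zero] at hnorm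

theorem sq_div_two_sub_comp_eq {G G' u u' E E' : 𝕜 → 𝕜} (hs : Convex ℝ s)
    (hG : ∀ x ∈ s, HasDerivAt G (G' x) (u x))
    (hu : ∀ x ∈ s, HasDerivWithinAt u (u' x) s x)
    (hE : ∀ x ∈ s, HasDerivWithinAt E (E' x) s x)
    (hbalance : ∀ x ∈ s, G' x * u' x = E x * E' x)
    {x y : 𝕜} (hx : x ∈ s) (hy : y ∈ s) :
    E x ^ 2 / 2 - G (u x) = E y ^ 2 / 2 - G (u y) := by
  refine eq_of_hasDerivWithinAt_zero (f := fun z => E z ^ 2 / 2 - G (u z)) hs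
    (fun z hz => ?_) hx hy
  have hsq : HasDerivWithinAt (fun z => E z ^ 2 / 2) (E z * E' z) s z :=
    (((hE z hz).pow 2).div_const 2).congr_deriv (by simp [mul_assoc])
  have hcomp : HasDerivWithinAt (fun z => G (u z)) (G' z * u' z) s z :=
    (hG z hz).comp_hasDerivWithinAt z (hu z hz)
  exact (hsq.sub hcomp).congr_deriv (by rw [hbalance z hz, sub_self])

theorem hasDerivAt_integral_of_continuousOn_isOpen {F : Type*} [NormedAddCommGroup F]
    [NormedSpace ℝ F] [CompleteSpace F] {f : ℝ → F} {U : Set ℝ} {a b : ℝ} (hU : IsOpen U)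
    (hf : ContinuousOn f U) (hab : uIcc a b ⊆ U) :
    HasDerivAt (fun v => ∫ t in a..v, f t) (f b) b :=
  have hb : b ∈ U := hab right_mem_uIcc
  integral_hasDerivAt_right (hf.mono hab).intervalIntegrable
    (hf.stronglyMeasurableAtFilter hU b hb) (hf.continuousAt (hU.mem_nhds hb))

end Calculus

/-- The integrand of `Hfun`, so that `H' = (J/ū^{in}) · HfunIntegrand` on `(0, ∞)`. -/
noncomputable def HfunIntegrand (γ ρin S₀ J t : ℝ) : ℝ :=
  t ^ (-(γ + 1)) * ((t ^ (γ + 1) - usonic γ S₀ J ^ (γ + 1)) * (uIn ρin J - t))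

section Hfun

variable {γ ρin S₀ J v : ℝ}

theorem usonic_pos (hγ : 0 < γ) (hS₀ : 0 < S₀) (hJ : 0 < J) : 0 < usonic γ S₀ J := by
  unfold usonic
  positivity

theorem continuousOn_HfunIntegrand : ContinuousOn (HfunIntegrand γ ρin S₀ J) (Ioi 0) := by
  have hrpow (p : ℝ) : ContinuousOn (fun t : ℝ => t ^ p) (Ioi 0) := fun t ht =>
    (Real.continuousAt_rpow_const t p (Or.inl (ne_of_gt ht))).continuousWithinAt
  exact (hrpow _).mul (((hrpow _).sub continuousOn_const).mul
    (continuousOn_const.sub continuousOn_id))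

theorem hasDerivAt_Hfun (hsonic : 0 < usonic γ S₀ J) (hv : 0 < v) :
    HasDerivAt (Hfun γ ρin S₀ J) (J / uIn ρin J * HfunIntegrand γ ρin S₀ J v) v :=
  (hasDerivAt_integral_of_continuousOn_isOpen isOpen_Ioi continuousOn_HfunIntegrand
    (ordConnected_Ioi.uIcc_subset hsonic hv)).const_mul _

theorem HfunIntegrand_mul_of_momentum {e w : ℝ} (hv : 0 < v)
    (hmomentum : (v ^ (γ + 1) - usonic γ S₀ J ^ (γ + 1)) * w = e * v ^ γ) :
    HfunIntegrand γ ρin S₀ J v * w = e * ((uIn ρin J - v) / v) := by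
  have hpow : v ^ (-(γ + 1)) * v ^ γ = v⁻¹ := by
    rw [← Real.rpow_add hv, ← Real.rpow_neg_one]
    ring_nf
  calc HfunIntegrand γ ρin S₀ J v * w
      = v ^ (-(γ + 1)) * ((v ^ (γ + 1) - usonic γ S₀ J ^ (γ + 1)) * w) * (uIn ρin J - v) := by
        unfold HfunIntegrand; ring
    _ = e * (v ^ (-(γ + 1)) * v ^ γ) * (uIn ρin J - v) := by rw [hmomentum]; ring
    _ = e * ((uIn ρin J - v) / v) := by rw [hpow]; ring

theorem div_uIn_mul_sub_div (hρin : ρin ≠ 0) (hJ : J ≠ 0) (hv : v ≠ 0) :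
    J / uIn ρin J * ((uIn ρin J - v) / v) = J / v - ρin := by
  unfold uIn
  field_simp

end Hfun

theorem stmt5_general {γ ρin S₀ J : ℝ} (hγ : 0 < γ) (hρin : ρin ≠ 0) (hS₀ : 0 < S₀) (hJ : 0 < J)
    {s : Set ℝ} (hs : Convex ℝ s) {u E u' : ℝ → ℝ}
    (hupos : ∀ x ∈ s, 0 < u x)
    (hu : ∀ x ∈ s, HasDerivWithinAt u (u' x) s x)
    (hE : ∀ x ∈ s, HasDerivWithinAt E (J / u x - ρin) s x)
    (hmomentum : ∀ x ∈ s,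
      (u x ^ (γ + 1) - usonic γ S₀ J ^ (γ + 1)) * u' x = E x * u x ^ γ)
    {x y : ℝ} (hx : x ∈ s) (hy : y ∈ s) :
    E x ^ 2 / 2 - Hfun γ ρin S₀ J (u x) = E y ^ 2 / 2 - Hfun γ ρin S₀ J (u y) := by
  refine sq_div_two_sub_comp_eq hs
    (fun z hz => hasDerivAt_Hfun (usonic_pos hγ hS₀ hJ) (hupos z hz)) hu hE (fun z hz => ?_) hx hy
  rw [mul_assoc, HfunIntegrand_mul_of_momentum (hupos z hz) (hmomentum z hz), mul_left_comm,
    div_uIn_mul_sub_div hρin hJ.ne' (hupos z hz).ne']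

/-- Conservation of `½Ē² − H(ū₁)` along `C¹` solutions of the one-dimensional steady
Euler–Poisson ODE system (in the multiplied form valid at the sonic value). -/
theorem stmt5
    (γ ρin S₀ J u₀ E₀ T : ℝ)
    (hγ : 1 < γ) (hρin : 0 < ρin) (hS₀ : 0 < S₀) (hJ : 0 < J)
    (hu₀ : 0 < u₀) (hT : 0 < T)
    (u E u' E' : ℝ → ℝ)
    (hupos : ∀ x ∈ Ico (0:ℝ) T, 0 < u x)
    (hu0 : u 0 = u₀) (hE0 : E 0 = E₀)
    (hud : ∀ x ∈ Ico (0:ℝ) T, HasDerivWithinAt u (u' x) (Ico (0:ℝ) T) x)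
    (hEd : ∀ x ∈ Ico (0:ℝ) T, HasDerivWithinAt E (E' x) (Ico (0:ℝ) T) x)
    (hu'c : ContinuousOn u' (Ico (0:ℝ) T))
    (hE'c : ContinuousOn E' (Ico (0:ℝ) T))
    (hODE1 : ∀ x ∈ Ico (0:ℝ) T,
      (u x ^ (γ + 1) - usonic γ S₀ J ^ (γ + 1)) * u' x = E x * u x ^ γ)
    (hODE2 : ∀ x ∈ Ico (0:ℝ) T, E' x = J / u x - ρin) :
    ∀ x ∈ Ico (0:ℝ) T,
      E x ^ 2 / 2 - Hfun γ ρin S₀ J (u x) = E₀ ^ 2 / 2 - Hfun γ ρin S₀ J u₀ := by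
  intro x hx
  rw [← hu0, ← hE0]
  exact stmt5_general (zero_lt_one.trans hγ) hρin.ne' hS₀ hJ (convex_Ico 0 T) hupos hud
    (fun y hy => hODE2 y hy ▸ hEd y hy) hODE1 hx ⟨le_rfl, hT⟩
end
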